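/- arXiv:2510.16910 — 3 statements merged into one kernel-verified Lean document; each statement's English description precedes it below -/
import Mathlib

section
/- Let A be a commutative semi-simple Banach algebra and U an automorphism of A with U^n ≠ I for all positive integers n. Then the spectrum of U contains the entire unit circle {λ ∈ ℂ : |λ| = 1}. -/
/-!
For a character `φ` of `A`, restrict Gelfand transforms to the orbit `n ↦ φ ∘ Uⁿ` and let `B` be the
uniform closure in `ℓ^∞(ℤ)` of the sequences so obtained; `U` induces on `B` the bilateral shift
`V`, an isometric automorphism. Its approximate eigenvalues have modulus one, and they are closed
under multiplication: translating one of two approximate eigenvectors keeps it an approximate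
eigenvector and can be used to line up its peak with that of the other, so that the product does not
become small. By the maximum principle they belong to the spectrum of `U`.

If some `λ` of modulus one is not in the spectrum of `U`, the powers of every approximate eigenvalue
of `V` stay away from `λ`, and by Dirichlet's approximation theorem all these eigenvalues are `m`-th
roots of unity for an `m` depending only on `λ` and its distance to the spectrum. Then `V ^ m` is an
isometry with spectrum contained in `{1}`, hence the identity by Gelfand's theorem. So every
character takes the same value at `Uᵐ a` and at `a`, and semisimplicity gives `Uᵐ = 1`.
-/

namespace KamowitzScheinberg

open Metric Set Complex

section UnitCircle

lemma norm_exp_mul_I_sub_exp_mul_I_le (a b : ℝ) : ‖exp (a * I) - exp (b * I)‖ ≤ |a - b| := by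
  have factor : exp (a * I) - exp (b * I) = exp (b * I) * (exp (I * ((a - b : ℝ) : ℂ)) - 1) := by
    rw [mul_sub, ← exp_add, mul_one]
    congr 2
    push_cast
    ring
  rw [factor, norm_mul, norm_exp_ofReal_mul_I, one_mul]
  exact Real.norm_exp_I_mul_ofReal_sub_one_le

lemma exists_pow_eq_exp_mul_I_abs_le {g : ℂ} (hg : ‖g‖ = 1) {N : ℕ} (hN : 0 < N) :
    ∃ k : ℕ, 0 < k ∧ k ≤ N ∧ ∃ δ : ℝ, g ^ k = exp (δ * I) ∧ |δ| ≤ 2 * Real.pi / (N + 1) := by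
  obtain ⟨θ, rfl⟩ := (norm_eq_one_iff g).1 hg
  obtain ⟨k, hk, hkN, hround⟩ := Real.exists_nat_abs_mul_sub_round_le (θ / (2 * Real.pi)) hN
  set q : ℤ := round (k * (θ / (2 * Real.pi)))
  refine ⟨k, hk, hkN, 2 * Real.pi * (k * (θ / (2 * Real.pi)) - q), ?_, ?_⟩
  · rw [← exp_nat_mul, exp_eq_exp_iff_exists_int]
    refine ⟨q, ?_⟩
    push_cast
    field_simp
    ring
  · rw [abs_mul, abs_of_pos Real.two_pi_pos, ← mul_one_div (2 * Real.pi)]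
    exact mul_le_mul_of_nonneg_left hround Real.two_pi_pos.le

lemma exists_int_le_mul {β : ℝ} (hβ : β ≠ 0) (x : ℝ) : ∃ j : ℤ, x ≤ j * β := by
  rcases hβ.lt_or_gt with h | h
  · exact ⟨⌊x / β⌋, (le_div_iff_of_neg h).1 (Int.floor_le _)⟩
  · exact ⟨⌈x / β⌉, (div_le_iff₀ h).1 (Int.le_ceil _)⟩

lemma exists_norm_exp_mul_I_pow_sub_le {δ : ℝ} (hδ : δ ≠ 0) {z : ℂ} (hz : ‖z‖ = 1) :
    ∃ n : ℕ, 0 < n ∧ ‖exp (δ * I) ^ n - z‖ ≤ |δ| := by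
  obtain ⟨α, rfl⟩ := (norm_eq_one_iff z).1 hz
  obtain ⟨j, hj⟩ := exists_int_le_mul (β := 2 * Real.pi / δ) (by positivity) (1 - α / δ)
  -- `s * δ` is an argument of `z` lying at least one step of length `|δ|` past `0`
  set s : ℝ := α / δ + j * (2 * Real.pi / δ) with hs
  have one_le_s : 1 ≤ s := by linarith
  have arg_z : exp (α * I) = exp ((s * δ : ℝ) * I) := by
    rw [exp_eq_exp_iff_exists_int]
    have : s * δ = α + j * (2 * Real.pi) := by rw [hs]; field_simp
    exact ⟨-j, by rw [this]; push_cast; ring⟩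
  have arg_pow : exp (δ * I) ^ ⌊s⌋₊ = exp ((⌊s⌋₊ * δ : ℝ) * I) := by
    rw [← exp_nat_mul]
    congr 1
    push_cast
    ring
  have floor_close : |(⌊s⌋₊ : ℝ) - s| ≤ 1 := by
    rw [abs_le]
    constructor <;> linarith [Nat.floor_le (zero_le_one.trans one_le_s), Nat.lt_floor_add_one s]
  refine ⟨⌊s⌋₊, Nat.floor_pos.2 one_le_s, ?_⟩
  calc ‖exp (δ * I) ^ ⌊s⌋₊ - exp (α * I)‖ ≤ |⌊s⌋₊ * δ - s * δ| := by
        rw [arg_pow, arg_z]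
        exact norm_exp_mul_I_sub_exp_mul_I_le _ _
    _ = |⌊s⌋₊ - s| * |δ| := by rw [← sub_mul, abs_mul]
    _ ≤ |δ| := mul_le_of_le_one_left (abs_nonneg δ) floor_close

lemma exists_pow_eq_one_of_forall_le_norm_pow_sub {lam : ℂ} (hlam : ‖lam‖ = 1) {ε : ℝ}
    (hε : 0 < ε) : ∃ m : ℕ, 0 < m ∧ ∀ g : ℂ, ‖g‖ = 1 →
      (∀ n : ℕ, 0 < n → ε ≤ ‖g ^ n - lam‖) → g ^ m = 1 := by
  obtain ⟨N, hN⟩ := exists_nat_gt (2 * Real.pi / ε)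
  have N_pos : 0 < N := Nat.cast_pos.1 ((by positivity : 0 < 2 * Real.pi / ε).trans hN)
  refine ⟨N.factorial, N.factorial_pos, fun g hg far => ?_⟩
  obtain ⟨k, hk, hkN, δ, hδ, δ_le⟩ := exists_pow_eq_exp_mul_I_abs_le hg N_pos
  have δ_lt : |δ| < ε := by
    refine δ_le.trans_lt ((div_lt_comm₀ (by positivity) hε).2 (hN.trans (lt_add_one _)))
  have δ_eq_zero : δ = 0 := by
    by_contra hδ0
    obtain ⟨n, hn, close⟩ := exists_norm_exp_mul_I_pow_sub_le hδ0 hlam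
    have := far (k * n) (Nat.mul_pos hk hn)
    rw [pow_mul, hδ] at this
    linarith
  obtain ⟨c, hc⟩ := Nat.dvd_factorial hk hkN
  rw [hc, pow_mul, hδ, δ_eq_zero, ofReal_zero, zero_mul, exp_zero, one_pow]

end UnitCircle

section ApproxEigenvalue

/-- Membership of `z` in the approximate point spectrum of `T`: there are vectors `x` for which
`z • x - T x` is arbitrarily small relative to `x`. The strict inequality forces `x ≠ 0`. -/
def IsApproxEigenvalue {𝕜 E : Type*} [NormedField 𝕜] [SeminormedAddCommGroup E] [NormedSpace 𝕜 E]
    (T : E →L[𝕜] E) (z : 𝕜) : Prop :=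
  ∀ ε > 0, ∃ x, ‖z • x - T x‖ < ε * ‖x‖

section Basic

variable {𝕜 E : Type*} [NormedField 𝕜] [SeminormedAddCommGroup E] [NormedSpace 𝕜 E]
  {T : E →L[𝕜] E} {z : 𝕜}

lemma abs_norm_sub_one_mul_norm_le (hT : ∀ x, ‖T x‖ = ‖x‖) (z : 𝕜) (x : E) :
    |‖z‖ - 1| * ‖x‖ ≤ ‖z • x - T x‖ := by
  calc |‖z‖ - 1| * ‖x‖ = |‖z • x‖ - ‖T x‖| := by
        rw [hT, norm_smul, ← sub_one_mul, abs_mul, abs_norm]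
    _ ≤ ‖z • x - T x‖ := abs_norm_sub_norm_le _ _

lemma not_isApproxEigenvalue_iff :
    ¬ IsApproxEigenvalue T z ↔ ∃ c > 0, ∀ x, c * ‖x‖ ≤ ‖z • x - T x‖ := by
  simp only [IsApproxEigenvalue, not_forall, not_exists, not_lt, exists_prop]

lemma IsApproxEigenvalue.norm_eq_one (hT : ∀ x, ‖T x‖ = ‖x‖) (hz : IsApproxEigenvalue T z) :
    ‖z‖ = 1 := by
  by_contra hne
  exact not_isApproxEigenvalue_iff.2
    ⟨|‖z‖ - 1|, abs_pos.2 (sub_ne_zero.2 hne), abs_norm_sub_one_mul_norm_le hT z⟩ hz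

end Basic

section Multiplicative

variable {𝕜 B : Type*} [NormedField 𝕜] [SeminormedRing B] [NormedAlgebra 𝕜 B]
  {T : B →L[𝕜] B} {c : ℝ}

/- Moving `y` by an isometry `S` commuting with `T` keeps it an approximate eigenvector, and the
product `x * S y` of approximate eigenvectors is one as soon as it is not too small. -/
lemma IsApproxEigenvalue.mul (hT : ∀ x, ‖T x‖ = ‖x‖) (T_mul : ∀ x y, T (x * y) = T x * T y)
    (hc : 0 < c) (transitive : ∀ x y : B, ∃ S : B →ₗᵢ[𝕜] B,
      (∀ v, S (T v) = T (S v)) ∧ c * (‖x‖ * ‖y‖) ≤ ‖x * S y‖)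
    {z w : 𝕜} (hz : IsApproxEigenvalue T z) (hw : IsApproxEigenvalue T w) :
    IsApproxEigenvalue T (z * w) := by
  intro ε hε
  obtain ⟨x, hx⟩ := hz (ε * c / 2) (by positivity)
  obtain ⟨y, hy⟩ := hw (ε * c / 2) (by positivity)
  obtain ⟨S, S_comm, le_norm⟩ := transitive x y
  have norm_x_pos : 0 < ‖x‖ :=
    pos_of_mul_pos_right ((norm_nonneg _).trans_lt hx) (by positivity)
  have norm_y_pos : 0 < ‖y‖ :=
    pos_of_mul_pos_right ((norm_nonneg _).trans_lt hy) (by positivity)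
  have hSy : ‖w • S y - T (S y)‖ < ε * c / 2 * ‖y‖ := by
    rwa [← S_comm, ← map_smul, ← map_sub, S.norm_map]
  have leibniz : (z * w) • (x * S y) - T (x * S y)
      = (z • x - T x) * (w • S y) + T x * (w • S y - T (S y)) := by
    rw [T_mul, sub_mul, mul_sub, smul_mul_smul_comm]
    abel
  refine ⟨x * S y, ?_⟩
  calc ‖(z * w) • (x * S y) - T (x * S y)‖
      ≤ ‖z • x - T x‖ * ‖w • S y‖ + ‖T x‖ * ‖w • S y - T (S y)‖ := by
        rw [leibniz]
        exact (norm_add_le _ _).trans (add_le_add (norm_mul_le _ _) (norm_mul_le _ _))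
    _ = ‖z • x - T x‖ * ‖y‖ + ‖x‖ * ‖w • S y - T (S y)‖ := by
        rw [norm_smul, hw.norm_eq_one hT, one_mul, S.norm_map, hT]
    _ < ε * c / 2 * ‖x‖ * ‖y‖ + ‖x‖ * (ε * c / 2 * ‖y‖) := by gcongr
    _ = ε * (c * (‖x‖ * ‖y‖)) := by ring
    _ ≤ ε * ‖x * S y‖ := by gcongr

lemma IsApproxEigenvalue.pow (hT : ∀ x, ‖T x‖ = ‖x‖) (T_mul : ∀ x y, T (x * y) = T x * T y)
    (hc : 0 < c) (transitive : ∀ x y : B, ∃ S : B →ₗᵢ[𝕜] B,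
      (∀ v, S (T v) = T (S v)) ∧ c * (‖x‖ * ‖y‖) ≤ ‖x * S y‖)
    {z : 𝕜} (hz : IsApproxEigenvalue T z) {n : ℕ} (hn : 0 < n) :
    IsApproxEigenvalue T (z ^ n) := by
  induction n, hn using Nat.le_induction with
  | base => rwa [Nat.succ_eq_add_one, zero_add, pow_one]
  | succ n _ ih => exact pow_succ z n ▸ ih.mul hT T_mul hc transitive hz

end Multiplicative

section Frontier

variable {𝕜 E : Type*} [NontriviallyNormedField 𝕜] [NormedAddCommGroup E] [NormedSpace 𝕜 E]

lemma norm_units_inv_le_of_forall_mul_norm_le {c : ℝ} (hc : 0 < c) (u : (E →L[𝕜] E)ˣ)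
    (hu : ∀ x, c * ‖x‖ ≤ ‖(u : E →L[𝕜] E) x‖) : ‖(↑u⁻¹ : E →L[𝕜] E)‖ ≤ c⁻¹ := by
  refine ContinuousLinearMap.opNorm_le_bound _ (by positivity) fun x => ?_
  have := hu ((↑u⁻¹ : E →L[𝕜] E) x)
  rw [← mul_apply_eq_comp, u.mul_inv, one_apply_eq_self] at this
  rwa [inv_mul_eq_div, le_div_iff₀' hc]

lemma norm_eq_one_of_mem_spectrum_of_isometry [CompleteSpace E] {T : E →L[𝕜] E}
    (hT : ∀ x, ‖T x‖ = ‖x‖) (T_unit : IsUnit T) {z : 𝕜} (hz : z ∈ spectrum 𝕜 T) : ‖z‖ = 1 := by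
  obtain ⟨u, rfl⟩ := T_unit
  have norm_u : ‖(u : E →L[𝕜] E)‖ ≤ 1 :=
    ContinuousLinearMap.opNorm_le_bound _ zero_le_one fun x => by rw [hT, one_mul]
  have norm_u_inv : ‖(↑u⁻¹ : E →L[𝕜] E)‖ ≤ 1 := by
    simpa using norm_units_inv_le_of_forall_mul_norm_le one_pos u fun x => by rw [hT, one_mul]
  have norm_le_one {T : E →L[𝕜] E} (hT : ‖T‖ ≤ 1) {w : 𝕜} (hw : w ∈ spectrum 𝕜 T) : ‖w‖ ≤ 1 :=
    (spectrum.norm_le_norm_mul_of_mem hw).trans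
      (mul_le_one₀ hT (norm_nonneg _) ContinuousLinearMap.norm_id_le)
  have norm_inv_le_one : ‖z⁻¹‖ ≤ 1 := norm_le_one norm_u_inv (spectrum.inv₀_mem_inv_iff.2 hz)
  rw [norm_inv] at norm_inv_le_one
  have norm_pos : 0 < ‖z‖ := norm_pos_iff.2 (spectrum.ne_zero_of_mem_of_unit hz)
  exact le_antisymm (norm_le_one norm_u hz) ((inv_le_one₀ norm_pos).1 norm_inv_le_one)

lemma isApproxEigenvalue_of_mem_frontier_spectrum [CompleteSpace E] {T : E →L[𝕜] E} {z : 𝕜}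
    (hz : z ∈ frontier (spectrum 𝕜 T)) : IsApproxEigenvalue T z := by
  by_contra h
  obtain ⟨c, hc, lower⟩ := not_isApproxEigenvalue_iff.1 h
  rw [frontier_eq_closure_inter_closure, (spectrum.isClosed T).closure_eq] at hz
  obtain ⟨μ, hμ, z_near⟩ := Metric.mem_closure_iff.1 hz.2 (c / 2) (by positivity)
  rw [dist_eq_norm] at z_near
  obtain ⟨u, hu⟩ := spectrum.notMem_iff.1 hμ
  have diff_eq : algebraMap 𝕜 (E →L[𝕜] E) z - T - u = algebraMap 𝕜 (E →L[𝕜] E) (z - μ) := by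
    rw [hu, map_sub]
    abel
  have lower_u (x : E) : c / 2 * ‖x‖ ≤ ‖(u : E →L[𝕜] E) x‖ := by
    have u_apply : (u : E →L[𝕜] E) x = (z • x - T x) - (z - μ) • x := by
      rw [hu, Algebra.algebraMap_eq_smul_one]
      simp only [sub_apply, smul_apply, one_apply_eq_self]
      module
    calc c / 2 * ‖x‖ ≤ c * ‖x‖ - ‖z - μ‖ * ‖x‖ := by nlinarith [norm_nonneg x]
      _ ≤ ‖z • x - T x‖ - ‖(z - μ) • x‖ := by rw [norm_smul]; gcongr; exact lower x
      _ ≤ ‖(u : E →L[𝕜] E) x‖ := u_apply ▸ norm_sub_norm_le _ _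
  have : Nontrivial (E →L[𝕜] E) := by
    by_contra! _
    simp [spectrum.of_subsingleton] at hz
  refine hz.1 (u.ofNearby _ ?_).isUnit
  calc ‖algebraMap 𝕜 (E →L[𝕜] E) z - T - u‖ ≤ ‖z - μ‖ := by
        rw [diff_eq, norm_algebraMap]
        exact mul_le_of_le_one_right (norm_nonneg _) ContinuousLinearMap.norm_id_le
    _ < c / 2 := z_near
    _ ≤ ‖(↑u⁻¹ : E →L[𝕜] E)‖⁻¹ :=
        (le_inv_comm₀ (by positivity) (norm_pos_iff.2 u⁻¹.ne_zero)).2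
          (norm_units_inv_le_of_forall_mul_norm_le (by positivity) u lower_u)

end Frontier

lemma isApproxEigenvalue_of_mem_spectrum_of_isometry {E : Type*} [NormedAddCommGroup E]
    [NormedSpace ℂ E] [CompleteSpace E] {T : E →L[ℂ] E} (hT : ∀ x, ‖T x‖ = ‖x‖)
    (T_unit : IsUnit T) {z : ℂ} (hz : z ∈ spectrum ℂ T) : IsApproxEigenvalue T z := by
  have spectrum_subset : spectrum ℂ T ⊆ sphere 0 1 := fun w hw =>
    mem_sphere_zero_iff_norm.2 (norm_eq_one_of_mem_spectrum_of_isometry hT T_unit hw)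
  have interior_eq_empty : interior (spectrum ℂ T) = ∅ :=
    subset_empty_iff.1 ((interior_mono spectrum_subset).trans_eq (interior_sphere 0 one_ne_zero))
  apply isApproxEigenvalue_of_mem_frontier_spectrum
  rwa [(spectrum.isClosed T).frontier_eq, interior_eq_empty, sdiff_empty]

end ApproxEigenvalue

section MaximumPrinciple

lemma norm_quadratic_of_mem_sphere {lam z : ℂ} (hlam : ‖lam‖ = 1) {r : ℝ}
    (hz : z ∈ sphere lam r) :
    ‖(z - lam) ^ 2 + r ^ 2 * lam * (z - lam) + r ^ 2 * lam ^ 2‖ = r * |‖z‖ ^ 2 - 1| := by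
  rw [mem_sphere_iff_norm] at hz
  have mul_conj_eq (w : ℂ) : w * (starRingEnd ℂ) w = ((‖w‖ ^ 2 : ℝ) : ℂ) := by
    rw [mul_conj, normSq_eq_norm_sq]
  have lam_mul_conj : lam * (starRingEnd ℂ) lam = 1 := by rw [mul_conj_eq, hlam]; norm_num
  have r_sq : (r : ℂ) ^ 2 = (z - lam) * (starRingEnd ℂ) (z - lam) := by
    rw [mul_conj_eq, hz, ofReal_pow]
  have factor : (z - lam) ^ 2 + r ^ 2 * lam * (z - lam) + r ^ 2 * lam ^ 2
      = (z - lam) * lam * ((‖z‖ ^ 2 - 1 : ℝ) : ℂ) := by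
    rw [r_sq, ofReal_sub, ← mul_conj_eq, map_sub, ofReal_one]
    linear_combination (-(z - lam) * z) * lam_mul_conj
  rw [factor, norm_mul, norm_mul, hz, hlam, norm_real, Real.norm_eq_abs, mul_one]

/- Multiplying by the quadratic of `norm_quadratic_of_mem_sphere`, which vanishes where the circle
`‖z - lam‖ = r` meets the unit circle, makes `g` bounded on the former. -/
lemma mul_norm_le_of_abs_norm_sub_one_mul_norm_le {E : Type*} [NormedAddCommGroup E]
    [NormedSpace ℂ E] {g : ℂ → E} {lam : ℂ} (hlam : ‖lam‖ = 1) {r M : ℝ} (hr : 0 < r)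
    (hg : DiffContOnCl ℂ g (ball lam r)) (bound : ∀ z ∈ sphere lam r, |‖z‖ - 1| * ‖g z‖ ≤ M) :
    r * ‖g lam‖ ≤ (2 + r) * M := by
  set p : ℂ → ℂ := fun z => (z - lam) ^ 2 + r ^ 2 * lam * (z - lam) + r ^ 2 * lam ^ 2 with hp
  have p_diff : Differentiable ℂ p := by fun_prop
  have bound_frontier : ∀ z ∈ frontier (ball lam r), ‖p z • g z‖ ≤ r * ((2 + r) * M) := by
    intro z hz
    rw [frontier_ball _ hr.ne'] at hz
    have norm_z_le : ‖z‖ ≤ 1 + r := by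
      simpa [hlam, mem_sphere_iff_norm.1 hz] using norm_le_norm_add_norm_sub' z lam
    calc ‖p z • g z‖ = r * |‖z‖ ^ 2 - 1| * ‖g z‖ := by
          rw [norm_smul, norm_quadratic_of_mem_sphere hlam hz]
      _ = r * ((‖z‖ + 1) * (|‖z‖ - 1| * ‖g z‖)) := by
          rw [← one_pow 2, sq_sub_sq, abs_mul, abs_of_nonneg (by positivity : 0 ≤ ‖z‖ + 1), one_pow]
          ring
      _ ≤ r * ((2 + r) * M) := by
          have : ‖z‖ + 1 ≤ 2 + r := by linarith
          gcongr
          exact bound z hz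
  have at_center := norm_le_of_forall_mem_frontier_norm_le isBounded_ball
    (p_diff.diffContOnCl.smul hg) bound_frontier (subset_closure (mem_ball_self hr))
  have norm_p_center : ‖p lam‖ = r * r := by
    simp [hp, hlam, abs_of_pos hr, sq]
  rw [norm_smul, norm_p_center, mul_assoc] at at_center
  exact le_of_mul_le_mul_left at_center hr

variable {A X : Type*} [NormedAddCommGroup A] [NormedSpace ℂ A] [CompleteSpace A]
  [NormedAddCommGroup X] [NormedSpace ℂ X] {U : A →L[ℂ] A} {V : X →L[ℂ] X} {F : A →L[ℂ] X}

lemma mul_norm_map_le_of_closedBall_subset_resolventSet (hV : ∀ x, ‖V x‖ = ‖x‖)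
    (semiconj : ∀ a, F (U a) = V (F a)) {lam : ℂ} (hlam : ‖lam‖ = 1) {r : ℝ} (hr : 0 < r)
    (hball : closedBall lam r ⊆ resolventSet ℂ U) (b : A) :
    r * ‖F b‖ ≤ (2 + r) * ‖F (lam • b - U b)‖ := by
  set a := lam • b - U b
  set g : ℂ → X := fun z => F (resolvent U z a) with hg
  have g_diff : DiffContOnCl ℂ g (ball lam r) := by
    apply DifferentiableOn.diffContOnCl
    rw [closure_ball _ hr.ne']
    intro z hz
    have resolvent_diff : DifferentiableAt ℂ (resolvent U) z :=
      (spectrum.hasDerivAt_resolvent_const_left (hball hz)).differentiableAt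
    exact (F.differentiableAt.comp z
      (resolvent_diff.clm_apply (differentiableAt_const a))).differentiableWithinAt
  have g_solves : ∀ z ∈ closedBall lam r, z • g z - V (g z) = F a := by
    intro z hz
    have := congrArg (fun T : A →L[ℂ] A => T a) (Ring.mul_inverse_cancel _ (hball hz))
    rw [hg, ← semiconj, ← map_smul, ← map_sub]
    congr 1
  have g_center : g lam = F b := by
    have := congrArg (fun T : A →L[ℂ] A => T b)
      (Ring.inverse_mul_cancel _ (hball (mem_closedBall_self hr.le)))
    exact congrArg F this
  rw [← g_center]
  refine mul_norm_le_of_abs_norm_sub_one_mul_norm_le hlam hr g_diff fun z hz => ?_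
  rw [← g_solves z (sphere_subset_closedBall hz)]
  exact abs_norm_sub_one_mul_norm_le hV z (g z)

lemma IsApproxEigenvalue.mem_spectrum_of_semiconj (hV : ∀ x, ‖V x‖ = ‖x‖) (hF : DenseRange F)
    (semiconj : ∀ a, F (U a) = V (F a)) {z : ℂ} (hz : IsApproxEigenvalue V z) :
    z ∈ spectrum ℂ U := by
  by_contra hzU
  obtain ⟨r, hr, hball⟩ := nhds_basis_closedBall.mem_iff.1
    ((spectrum.isClosed U).isOpen_compl.mem_nhds hzU)
  refine not_isApproxEigenvalue_iff.2 ⟨r / (2 + r), by positivity, fun x => ?_⟩ hz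
  rw [div_mul_eq_mul_div, div_le_iff₀' (by positivity)]
  induction x using hF.induction_on with
  | hp => exact isClosed_le (by fun_prop) (by fun_prop)
  | ih b =>
    rw [← semiconj, ← map_smul, ← map_sub]
    exact mul_norm_map_le_of_closedBall_subset_resolventSet hV semiconj (hz.norm_eq_one hV) hr
      (hball.trans (compl_compl _).le) b

end MaximumPrinciple

section Gelfand

variable {X : Type*} [NormedAddCommGroup X] [NormedSpace ℂ X] {W : X →L[ℂ] X}

lemma isUnit_one_sub_smul_sub_one (spectrum_subset : spectrum ℂ W ⊆ {1}) (w : ℂ) :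
    IsUnit (1 - w • (W - 1)) := by
  rcases eq_or_ne w 0 with rfl | hw
  · simp
  have notMem : 1 + w⁻¹ ∉ spectrum ℂ W := fun h => by simpa [hw] using spectrum_subset h
  have factor : 1 - w • (W - 1) = Units.mk0 w hw • (algebraMap ℂ (X →L[ℂ] X) (1 + w⁻¹) - W) := by
    rw [Units.smul_mk0, Algebra.algebraMap_eq_smul_one, smul_sub w _ W, smul_smul, mul_add,
      mul_inv_cancel₀ hw]
    module
  rw [factor]
  exact (spectrum.notMem_iff.1 notMem).smul _

variable [CompleteSpace X]

lemma norm_sub_one_mul_norm_le_of_norm_eq_one (hW : ∀ x, ‖W x‖ = ‖x‖)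
    (spectrum_subset : spectrum ℂ W ⊆ {1}) {lam : ℂ} (hlam : ‖lam‖ = 1) (x : X) :
    ‖lam - 1‖ * ‖x‖ ≤ 6 * ‖lam • x - W x‖ := by
  rcases eq_or_ne lam 1 with rfl | hne
  · simp only [sub_self, norm_zero, zero_mul]
    positivity
  have hr : 0 < ‖lam - 1‖ / 2 := by
    have := norm_pos_iff.2 (sub_ne_zero.2 hne)
    positivity
  have hball : closedBall lam (‖lam - 1‖ / 2) ⊆ resolventSet ℂ W := by
    intro z hz
    by_contra hzW
    rw [show z = 1 from spectrum_subset hzW, mem_closedBall', dist_eq_norm] at hz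
    linarith
  have norm_le_two : ‖lam - 1‖ ≤ 2 := by
    simpa [hlam, one_add_one_eq_two] using norm_sub_le lam 1
  have := mul_norm_map_le_of_closedBall_subset_resolventSet (F := .id ℂ X) hW (fun _ => rfl)
    hlam hr hball x
  simp only [ContinuousLinearMap.id_apply] at this
  nlinarith [norm_nonneg (lam • x - W x)]

lemma norm_sub_one_mul_norm_le (hW : ∀ x, ‖W x‖ = ‖x‖)
    (spectrum_subset : spectrum ℂ W ⊆ {1}) (z : ℂ) (x : X) :
    ‖z - 1‖ * ‖x‖ ≤ 13 * ‖z • x - W x‖ := by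
  obtain ⟨lam, hlam, dist_eq⟩ : ∃ lam : ℂ, ‖lam‖ = 1 ∧ ‖z - lam‖ = |‖z‖ - 1| := by
    refine ⟨exp (z.arg * I), norm_exp_ofReal_mul_I _, ?_⟩
    nth_rw 1 [← norm_mul_exp_arg_mul_I z]
    rw [← sub_one_mul, norm_mul, norm_exp_ofReal_mul_I, mul_one]
    exact_mod_cast norm_real (‖z‖ - 1)
  have dist_mul_le : ‖z - lam‖ * ‖x‖ ≤ ‖z • x - W x‖ :=
    dist_eq ▸ abs_norm_sub_one_mul_norm_le hW z x
  have move_to_z : ‖lam • x - W x‖ ≤ ‖z • x - W x‖ + ‖z - lam‖ * ‖x‖ := by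
    rw [← norm_smul, show lam • x - W x = (z • x - W x) - (z - lam) • x by module]
    exact norm_sub_le _ _
  have at_lam := norm_sub_one_mul_norm_le_of_norm_eq_one hW spectrum_subset hlam x
  calc ‖z - 1‖ * ‖x‖ ≤ (‖z - lam‖ + ‖lam - 1‖) * ‖x‖ := by
        gcongr
        exact norm_sub_le_norm_sub_add_norm_sub z lam 1
    _ = ‖z - lam‖ * ‖x‖ + ‖lam - 1‖ * ‖x‖ := add_mul _ _ _
    _ ≤ 13 * ‖z • x - W x‖ := by linarith

lemma norm_le_mul_norm_one_sub_smul_sub_one (hW : ∀ x, ‖W x‖ = ‖x‖)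
    (spectrum_subset : spectrum ℂ W ⊆ {1}) (w : ℂ) (x : X) :
    ‖x‖ ≤ 13 * ‖(1 - w • (W - 1)) x‖ := by
  rcases eq_or_ne w 0 with rfl | hw
  · simp only [zero_smul, sub_zero, one_apply_eq_self]
    linarith [norm_nonneg x]
  have apply_eq : (1 - w • (W - 1)) x = w • ((1 + w⁻¹) • x - W x) := by
    simp only [sub_apply, smul_apply, one_apply_eq_self, smul_sub w _ (W x), smul_smul, mul_add,
      mul_inv_cancel₀ hw]
    module
  have lower := norm_sub_one_mul_norm_le hW spectrum_subset (1 + w⁻¹) x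
  rw [add_sub_cancel_left, norm_inv, inv_mul_le_iff₀ (norm_pos_iff.2 hw)] at lower
  rw [apply_eq, norm_smul]
  linarith

/- Gelfand's theorem: `(1 - w • (W - 1))⁻¹` is a bounded entire function of `w`. -/
lemma eq_one_of_isometry_of_spectrum_subset (hW : ∀ x, ‖W x‖ = ‖x‖)
    (spectrum_subset : spectrum ℂ W ⊆ {1}) : W = 1 := by
  have unit := isUnit_one_sub_smul_sub_one spectrum_subset
  set J : ℂ → X →L[ℂ] X := fun w => Ring.inverse (1 - w • (W - 1)) with hJ
  have J_diff : Differentiable ℂ J := by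
    intro w
    have inner_diff : DifferentiableAt ℂ (fun w : ℂ => 1 - w • (W - 1)) w := by fun_prop
    have inverse_diff := differentiableAt_inverse (𝕜 := ℂ) (unit w)
    exact inverse_diff.comp w inner_diff
  have J_bounded : Bornology.IsBounded (range J) := by
    refine isBounded_iff_forall_norm_le.2 ⟨13, forall_mem_range.2 fun w => ?_⟩
    obtain ⟨u, hu⟩ := unit w
    simp only [hJ]
    rw [← hu, Ring.inverse_unit]
    refine (norm_units_inv_le_of_forall_mul_norm_le (c := 13⁻¹) (by norm_num) u
      fun x => ?_).trans_eq (inv_inv _)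
    rw [hu, inv_mul_le_iff₀ (by norm_num)]
    exact norm_le_mul_norm_one_sub_smul_sub_one hW spectrum_subset w x
  have J_one : J 1 = 1 := by
    rw [J_diff.apply_eq_apply_of_bounded J_bounded 1 0]
    simp [hJ]
  have J_one_mul : J 1 * (1 - (1 : ℂ) • (W - 1)) = 1 := Ring.inverse_mul_cancel _ (unit 1)
  rwa [J_one, one_mul, one_smul, sub_eq_self, sub_eq_zero] at J_one_mul

lemma pow_eq_one_of_forall_isApproxEigenvalue {V : X →L[ℂ] X} (hV : ∀ x, ‖V x‖ = ‖x‖)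
    (V_unit : IsUnit V) {m : ℕ} (hm : 0 < m) (roots : ∀ z, IsApproxEigenvalue V z → z ^ m = 1) :
    V ^ m = 1 := by
  have isometry_pow (n : ℕ) (x : X) : ‖(V ^ n) x‖ = ‖x‖ := by
    induction n with
    | zero => rfl
    | succ n ih => rw [pow_succ', mul_apply_eq_comp, hV, ih]
  refine eq_one_of_isometry_of_spectrum_subset (isometry_pow m) ?_
  rw [spectrum.map_pow_of_pos V hm]
  rintro _ ⟨z, hz, rfl⟩
  exact roots z (isApproxEigenvalue_of_mem_spectrum_of_isometry hV V_unit hz)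

end Gelfand

section Orbit

open BoundedContinuousFunction

section Translate

variable {G : Type*} [AddGroup G] [TopologicalSpace G] [ContinuousAdd G]

/-- Right translation by `g` on bounded continuous functions: `translate g x h = x (h + g)`. -/
noncomputable def translate (g : G) : (G →ᵇ ℂ) →L[ℂ] (G →ᵇ ℂ) :=
  compContinuousCLM ℂ ℂ (ContinuousMap.addRight g)

@[simp]
lemma translate_apply (g h : G) (x : G →ᵇ ℂ) : translate g x h = x (h + g) := rfl

lemma translate_mul (g : G) (x y : G →ᵇ ℂ) :
    translate g (x * y) = translate g x * translate g y := rfl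

lemma translate_translate (g h : G) (x : G →ᵇ ℂ) :
    translate g (translate h x) = translate (g + h) x := by
  ext
  simp [add_assoc]

lemma translate_zero (x : G →ᵇ ℂ) : translate 0 x = x := by
  ext
  simp

lemma norm_translate (g : G) (x : G →ᵇ ℂ) : ‖translate g x‖ = ‖x‖ := by
  refine le_antisymm (norm_compContinuous_le x _) ?_
  calc ‖x‖ = ‖translate (-g) (translate g x)‖ := by
        rw [translate_translate, neg_add_cancel, translate_zero]
    _ ≤ ‖translate g x‖ := norm_compContinuous_le _ _

end Translate

lemma exists_half_norm_le {α : Type*} [TopologicalSpace α] [Nonempty α] (x : α →ᵇ ℂ) :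
    ∃ s, ‖x‖ / 2 ≤ ‖x s‖ := by
  by_contra! small
  have norm_le_half : ‖x‖ ≤ ‖x‖ / 2 :=
    (norm_le (by positivity)).2 fun s => (small s).le
  have := small (Classical.arbitrary α)
  linarith [norm_nonneg (x (Classical.arbitrary α))]

lemma exists_le_norm_mul_translate {G : Type*} [AddGroup G] [TopologicalSpace G] [ContinuousAdd G]
    (x y : G →ᵇ ℂ) : ∃ g, 1 / 4 * (‖x‖ * ‖y‖) ≤ ‖x * translate g y‖ := by
  obtain ⟨s, hs⟩ := exists_half_norm_le x
  obtain ⟨t, ht⟩ := exists_half_norm_le y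
  refine ⟨-s + t, ?_⟩
  calc 1 / 4 * (‖x‖ * ‖y‖) = ‖x‖ / 2 * (‖y‖ / 2) := by ring
    _ ≤ ‖x s‖ * ‖y t‖ := by gcongr
    _ = ‖(x * translate (-s + t) y) s‖ := by simp
    _ ≤ ‖x * translate (-s + t) y‖ := norm_coe_le_norm _ _

variable {A : Type*} [NormedCommRing A] [NormedAlgebra ℂ A] [CompleteSpace A]
  (e : A ≃ₐ[ℂ] A) (φ : A →ₐ[ℂ] ℂ)

/-- The homomorphism sending `a` to the values `n ↦ φ (eⁿ a)` of its Gelfand transform along the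
orbit of the character `φ` under the automorphism `e`. -/
noncomputable def orbitMap : A →ₐ[ℂ] (ℤ →ᵇ ℂ) where
  toFun a := ofNormedAddCommGroup (fun n : ℤ => φ ((e ^ n) a)) continuous_of_discreteTopology
    (‖a‖ * ‖(1 : A)‖) fun n =>
      AlgHom.norm_apply_le_self_mul_norm_one (φ.comp (e ^ n).toAlgHom) a
  map_one' := by ext; simp
  map_mul' _ _ := by ext n; exact map_mul (φ.comp (e ^ n).toAlgHom) _ _
  map_zero' := by ext; simp
  map_add' _ _ := by ext n; exact map_add (φ.comp (e ^ n).toAlgHom) _ _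
  commutes' _ := by ext; simp

lemma orbitMap_apply (a : A) (n : ℤ) : orbitMap e φ a n = φ ((e ^ n) a) := rfl

lemma translate_orbitMap (a : A) (j : ℤ) :
    translate j (orbitMap e φ a) = orbitMap e φ ((e ^ j) a) := by
  ext n
  simp [orbitMap_apply, zpow_add]

lemma norm_orbitMap_le (a : A) : ‖orbitMap e φ a‖ ≤ ‖(1 : A)‖ * ‖a‖ := by
  rw [mul_comm]
  exact (norm_le (by positivity)).2 fun n =>
    AlgHom.norm_apply_le_self_mul_norm_one (φ.comp (e ^ n).toAlgHom) a

/-- The uniform closure of the range of `orbitMap e φ`: a Banach algebra on which `e` induces an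
isometric automorphism. -/
noncomputable def orbitAlgebra : Subalgebra ℂ (ℤ →ᵇ ℂ) :=
  (orbitMap e φ).range.topologicalClosure

instance : CompleteSpace (orbitAlgebra e φ) :=
  (Subalgebra.isClosed_topologicalClosure _).completeSpace_coe

lemma translate_mem_orbitAlgebra (j : ℤ) {x : ℤ →ᵇ ℂ} (hx : x ∈ orbitAlgebra e φ) :
    translate j x ∈ orbitAlgebra e φ := by
  refine map_mem_closure (translate j).continuous hx ?_
  rintro _ ⟨a, rfl⟩
  exact ⟨_, (translate_orbitMap e φ a j).symm⟩

/-- Translation by `j`, restricted to `orbitAlgebra e φ`; it is the isometry induced by `e ^ j`. -/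
noncomputable def orbitTranslate (j : ℤ) : orbitAlgebra e φ →ₗᵢ[ℂ] orbitAlgebra e φ where
  toFun x := ⟨translate j x, translate_mem_orbitAlgebra e φ j x.2⟩
  map_add' _ _ := rfl
  map_smul' _ _ := rfl
  norm_map' x := norm_translate j (x : ℤ →ᵇ ℂ)

lemma orbitTranslate_mul (j : ℤ) (x y : orbitAlgebra e φ) :
    orbitTranslate e φ j (x * y) = orbitTranslate e φ j x * orbitTranslate e φ j y :=
  Subtype.ext (translate_mul j (x : ℤ →ᵇ ℂ) y)

lemma orbitTranslate_orbitTranslate (i j : ℤ) (x : orbitAlgebra e φ) :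
    orbitTranslate e φ i (orbitTranslate e φ j x) = orbitTranslate e φ (i + j) x :=
  Subtype.ext (translate_translate i j (x : ℤ →ᵇ ℂ))

lemma orbitTranslate_zero (x : orbitAlgebra e φ) : orbitTranslate e φ 0 x = x :=
  Subtype.ext (translate_zero (x : ℤ →ᵇ ℂ))

/-- The bilateral shift on `orbitAlgebra e φ`, to which `e` is semiconjugate through the orbit
map. -/
noncomputable def orbitShift : orbitAlgebra e φ →L[ℂ] orbitAlgebra e φ :=
  (orbitTranslate e φ 1).toContinuousLinearMap

lemma norm_orbitShift (x : orbitAlgebra e φ) : ‖orbitShift e φ x‖ = ‖x‖ :=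
  (orbitTranslate e φ 1).norm_map x

lemma orbitShift_pow_apply (n : ℕ) (x : orbitAlgebra e φ) :
    (orbitShift e φ ^ n) x = orbitTranslate e φ n x := by
  induction n with
  | zero => exact (orbitTranslate_zero e φ x).symm
  | succ n ih =>
    rw [pow_succ', mul_apply_eq_comp, ih, Nat.cast_succ, add_comm]
    exact orbitTranslate_orbitTranslate e φ 1 n x

lemma isUnit_orbitShift : IsUnit (orbitShift e φ) := by
  refine isUnit_iff_exists.2 ⟨(orbitTranslate e φ (-1)).toContinuousLinearMap, ?_, ?_⟩ <;>
    exact ContinuousLinearMap.ext fun x =>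
      (orbitTranslate_orbitTranslate e φ _ _ x).trans (orbitTranslate_zero e φ x)

variable {e φ} in
lemma IsApproxEigenvalue.orbitShift_pow {z : ℂ} (hz : IsApproxEigenvalue (orbitShift e φ) z)
    {n : ℕ} (hn : 0 < n) : IsApproxEigenvalue (orbitShift e φ) (z ^ n) := by
  refine hz.pow (norm_orbitShift e φ) (orbitTranslate_mul e φ 1) (c := 1 / 4) (by norm_num)
    (fun x y => ?_) hn
  obtain ⟨j, hj⟩ := exists_le_norm_mul_translate (x : ℤ →ᵇ ℂ) y
  refine ⟨orbitTranslate e φ j, fun v => ?_, hj⟩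
  change orbitTranslate e φ j (orbitTranslate e φ 1 v)
    = orbitTranslate e φ 1 (orbitTranslate e φ j v)
  rw [orbitTranslate_orbitTranslate, orbitTranslate_orbitTranslate, add_comm]

/-- `orbitMap e φ` as a bounded operator into the closure of its range. -/
noncomputable def orbitMapCLM : A →L[ℂ] orbitAlgebra e φ :=
  ((orbitMap e φ).codRestrict (orbitAlgebra e φ) fun a =>
    Subalgebra.le_topologicalClosure _ ⟨a, rfl⟩).toLinearMap.mkContinuous ‖(1 : A)‖
      (norm_orbitMap_le e φ)

lemma denseRange_orbitMapCLM : DenseRange (orbitMapCLM e φ) := by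
  intro x
  rw [closure_subtype, ← range_comp]
  exact x.2

lemma orbitTranslate_orbitMapCLM (a : A) (j : ℤ) :
    orbitTranslate e φ j (orbitMapCLM e φ a) = orbitMapCLM e φ ((e ^ j) a) :=
  Subtype.ext (translate_orbitMap e φ a j)

lemma apply_pow_eq_of_orbitShift_pow_eq_one {m : ℕ} (h : orbitShift e φ ^ m = 1) (a : A) :
    φ ((e ^ m) a) = φ a := by
  have fixed : orbitMapCLM e φ ((e ^ (m : ℤ)) a) = orbitMapCLM e φ a := by
    rw [← orbitTranslate_orbitMapCLM, ← orbitShift_pow_apply, h, one_apply_eq_self]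
  exact DFunLike.congr_fun (congrArg Subtype.val fixed) 0

end Orbit

section Semisimple

variable {A : Type*} [NormedCommRing A] [NormedAlgebra ℂ A] [CompleteSpace A]

lemma exists_forall_character_pow_apply_eq {U : A →L[ℂ] A} {e : A ≃ₐ[ℂ] A} (he : ∀ a, e a = U a)
    {lam : ℂ} (hlam : ‖lam‖ = 1) (lam_notMem : lam ∉ spectrum ℂ U) :
    ∃ m : ℕ, 0 < m ∧ ∀ (φ : A →ₐ[ℂ] ℂ) (a : A), φ ((e ^ m) a) = φ a := by
  obtain ⟨ε, hε, hball⟩ := Metric.isOpen_iff.1 (spectrum.isClosed U).isOpen_compl lam lam_notMem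
  obtain ⟨m, hm, pow_eq_one⟩ := exists_pow_eq_one_of_forall_le_norm_pow_sub hlam hε
  refine ⟨m, hm, fun φ => apply_pow_eq_of_orbitShift_pow_eq_one e φ ?_⟩
  have semiconj (a : A) : orbitMapCLM e φ (U a) = orbitShift e φ (orbitMapCLM e φ a) := by
    rw [← he]
    exact (orbitTranslate_orbitMapCLM e φ a 1).symm
  refine pow_eq_one_of_forall_isApproxEigenvalue (norm_orbitShift e φ) (isUnit_orbitShift e φ) hm
    fun z hz => pow_eq_one z (hz.norm_eq_one (norm_orbitShift e φ)) fun n hn => ?_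
  have pow_mem : z ^ n ∈ spectrum ℂ U := (hz.orbitShift_pow hn).mem_spectrum_of_semiconj
    (norm_orbitShift e φ) (denseRange_orbitMapCLM e φ) semiconj
  by_contra! close
  exact hball (mem_ball_iff_norm.2 close) pow_mem

lemma eq_of_forall_character_apply_eq (hss : (⊥ : Ideal A).jacobson = ⊥) {a b : A}
    (h : ∀ φ : A →ₐ[ℂ] ℂ, φ a = φ b) : a = b := by
  rw [← sub_eq_zero, ← Ideal.mem_bot, ← hss, Ideal.mem_jacobson_bot]
  intro y
  by_contra not_unit
  obtain ⟨φ, hφ⟩ := WeakDual.CharacterSpace.exists_apply_eq_zero not_unit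
  have apply_eq : φ a = φ b := h (WeakDual.CharacterSpace.toAlgHom φ)
  simp [apply_eq] at hφ

end Semisimple

lemma map_one_of_surjective {M N : Type*} [MulOneClass M] [MulOneClass N] {f : M → N}
    (map_mul : ∀ x y, f (x * y) = f x * f y) (hf : Function.Surjective f) : f 1 = 1 := by
  obtain ⟨b, hb⟩ := hf 1
  rw [← mul_one (f 1), ← hb, ← map_mul, one_mul]

lemma algEquiv_pow_apply {R A : Type*} [CommSemiring R] [Semiring A] [Algebra R A]
    [TopologicalSpace A] {U : A →L[R] A} {e : A ≃ₐ[R] A} (he : ∀ a, e a = U a) (n : ℕ) (a : A) :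
    (e ^ n) a = (U ^ n) a := by
  induction n with
  | zero => rfl
  | succ n ih => rw [pow_succ', pow_succ', AlgEquiv.mul_apply, ih, he, mul_apply_eq_comp]

end KamowitzScheinberg

open KamowitzScheinberg in
/-- Kamowitz–Scheinberg: if `U` is an automorphism of a commutative semi-simple
Banach algebra with `U ^ n ≠ I` for all positive `n`, then the spectrum of `U`
contains the whole unit circle. -/
theorem stmt1 {A : Type*} [NormedCommRing A] [NormedAlgebra ℂ A] [CompleteSpace A]
    (hss : (⊥ : Ideal A).jacobson = ⊥)
    (U : A →L[ℂ] A) (hmul : ∀ x y : A, U (x * y) = U x * U y)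
    (hbij : Function.Bijective U)
    (hnp : ∀ n : ℕ, 0 < n → U ^ n ≠ 1) :
    Metric.sphere (0 : ℂ) 1 ⊆ spectrum ℂ U := by
  intro lam hlam
  by_contra lam_notMem
  let e : A ≃ₐ[ℂ] A := AlgEquiv.ofBijective
    (AlgHom.ofLinearMap U.toLinearMap (map_one_of_surjective hmul hbij.surjective) hmul) hbij
  have he (a : A) : e a = U a := rfl
  obtain ⟨m, hm, apply_pow⟩ := exists_forall_character_pow_apply_eq he
    (mem_sphere_zero_iff_norm.1 hlam) lam_notMem
  refine hnp m hm (ContinuousLinearMap.ext fun a => ?_)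
  rw [← algEquiv_pow_apply he]
  exact eq_of_forall_character_apply_eq hss fun φ => apply_pow φ a
end

section
/- Let A be a commutative semi-simple Banach algebra and U an automorphism of A with U^n ≠ I for all positive integers n. Then the spectrum σ(U) is a connected subset of ℂ. -/
/-!
Since `A` is semi-simple it embeds, by the Gelfand transform, as a dense subspace of a uniform
algebra `B`, and `U` extends to an isometric automorphism `V` of `B`, so `σ(V)` lies on the unit
circle. Because the norm of `B` is power-multiplicative, `σ(V)` is closed under taking powers; if it
is not the whole circle, it therefore consists of `M`-th roots of unity for some `M > 0`. Then
`σ(V ^ M) = {1}`, and a Liouville argument for the resolvent of the isometry `V ^ M` gives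
`V ^ M = 1`, hence `U ^ M = 1`. So `σ(V)` is the whole circle, and the maximum principle applied to
the resolvent of `U`, measured in the norm of `B`, shows that the circle lies in `σ(U)` as well.

If `σ(U)` were disconnected, some nonempty clopen piece of it would miss the circle. Surround that
piece by a bounded open set `O` whose closure avoids the rest of `σ(U)` and the circle. Averaging
the resolvent of `U` over the boundary of `O` against a measure representing evaluation at `w ∈ O`
yields an operator inverting `w - U`: inside `B` it is the same average of the resolvent of `V`,
which is holomorphic throughout `O`. So the piece does not meet `σ(U)`, a contradiction.
-/

open Metric Set MeasureTheory WeakDual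
open scoped CompactlySupported

section AddCircle

variable {T : ℝ} [Fact (0 < T)]

theorem exists_pos_norm_nsmul_coe_sub_le {a : ℝ} (ha : 0 < a) (y : AddCircle T) :
    ∃ j : ℕ, 0 < j ∧ ‖j • (a : AddCircle T) - y‖ ≤ a := by
  obtain ⟨b, ⟨hb, -⟩, rfl⟩ : y ∈ ((↑) : ℝ → AddCircle T) '' Ioc 0 (0 + T) :=
    (AddCircle.coe_image_Ioc_eq T 0).symm ▸ mem_univ y
  refine ⟨⌈b / a⌉₊, Nat.ceil_pos.2 (div_pos hb ha), ?_⟩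
  have hlower : b ≤ ⌈b / a⌉₊ * a := (div_le_iff₀ ha).1 (Nat.le_ceil _)
  have hupper : ⌈b / a⌉₊ * a < b + a := by
    calc ⌈b / a⌉₊ * a < (b / a + 1) * a := by gcongr; exact Nat.ceil_lt_add_one (by positivity)
      _ = b + a := by field_simp
  calc ‖⌈b / a⌉₊ • (a : AddCircle T) - b‖
      = ‖((⌈b / a⌉₊ * a - b : ℝ) : AddCircle T)‖ := by
        rw [AddCircle.coe_sub, ← nsmul_eq_mul, AddCircle.coe_nsmul]
    _ ≤ ‖(⌈b / a⌉₊ * a - b : ℝ)‖ := QuotientAddGroup.norm_mk_le_norm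
    _ ≤ a := by rw [Real.norm_eq_abs, abs_le]; constructor <;> linarith

theorem exists_pos_norm_nsmul_sub_le {x : AddCircle T} (hx : x ≠ 0) (y : AddCircle T) :
    ∃ j : ℕ, 0 < j ∧ ‖j • x - y‖ ≤ ‖x‖ := by
  obtain ⟨a, rfl, ha⟩ : ∃ a : ℝ, (a : AddCircle T) = x ∧ |a| = ‖x‖ := by
    obtain ⟨b, rfl⟩ := QuotientAddGroup.mk_surjective x
    refine ⟨b - round (T⁻¹ * b) * T, ?_, (AddCircle.norm_eq T).symm⟩
    rw [AddCircle.coe_sub, ← zsmul_eq_mul, AddCircle.coe_zsmul, AddCircle.coe_period, zsmul_zero,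
      sub_zero]
  have ha₀ : a ≠ 0 := by rintro rfl; simp at hx
  rw [← ha]
  rcases ha₀.lt_or_gt with h | h
  · obtain ⟨j, hj, hle⟩ := exists_pos_norm_nsmul_coe_sub_le (neg_pos.2 h) (-y)
    refine ⟨j, hj, ?_⟩
    rwa [AddCircle.coe_neg, smul_neg, neg_sub_neg, norm_sub_rev, ← abs_of_neg h] at hle
  · simpa only [abs_of_pos h] using exists_pos_norm_nsmul_coe_sub_le h y

theorem exists_pos_forall_nsmul_eq_zero {S : Set (AddCircle T)} (hS : IsClosed S)
    (hmul : ∀ x ∈ S, ∀ n : ℕ, 0 < n → n • x ∈ S) (hne : S ≠ univ) :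
    ∃ M : ℕ, 0 < M ∧ ∀ x ∈ S, M • x = 0 := by
  obtain ⟨y, hy⟩ := (ne_univ_iff_exists_notMem S).1 hne
  obtain ⟨ε, hε, hball⟩ := Metric.isOpen_iff.1 hS.isOpen_compl y hy
  obtain ⟨N, hN⟩ := exists_nat_gt (T / ε)
  have hT : 0 < T := Fact.out
  have hN₀ : (0 : ℝ) < N := (div_pos hT hε).trans hN
  refine ⟨N.factorial, N.factorial_pos, fun x hx => ?_⟩
  obtain ⟨k, hk, hle⟩ := AddCircle.exists_norm_nsmul_le x (Nat.cast_pos.1 hN₀)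
  suffices hkx : k • x = 0 by
    obtain ⟨d, hd⟩ := Nat.dvd_factorial hk.1 hk.2
    rw [hd, mul_nsmul, hkx, nsmul_zero]
  by_contra hkx
  obtain ⟨j, hj, hjle⟩ := exists_pos_norm_nsmul_sub_le hkx y
  have hsmall : T / (N + 1) < ε := by
    rw [div_lt_iff₀ (by positivity)]; rw [div_lt_iff₀ hε] at hN; linarith
  exact hball (mem_ball_iff_norm.2 (hjle.trans_lt (hle.trans_lt (mod_cast hsmall))))
    (hmul _ (hmul x hx k hk.1) j hj)

end AddCircle

theorem exists_pos_forall_pow_eq_one {K : Set ℂ} (hK : IsClosed K) (hsub : K ⊆ sphere 0 1)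
    (hpow : ∀ z ∈ K, ∀ n : ℕ, 0 < n → z ^ n ∈ K) (hne : ¬ sphere 0 1 ⊆ K) :
    ∃ M : ℕ, 0 < M ∧ ∀ z ∈ K, z ^ M = 1 := by
  let e : AddCircle (1 : ℝ) → ℂ := fun x => AddCircle.toCircle x
  have hsurj : ∀ z ∈ sphere (0 : ℂ) 1, ∃ x, e x = z := fun z hz => by
    obtain ⟨x, hx⟩ := (AddCircle.homeomorphCircle one_ne_zero).surjective ⟨z, hz⟩
    exact ⟨x, by rw [AddCircle.homeomorphCircle_apply] at hx; simp only [e, hx]⟩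
  have hpre : ∀ (x : AddCircle (1 : ℝ)) (n : ℕ), e (n • x) = e x ^ n := fun x n => by
    simp only [e, AddCircle.toCircle_nsmul, Circle.coe_pow]
  obtain ⟨M, hM, h⟩ := exists_pos_forall_nsmul_eq_zero (S := e ⁻¹' K)
    (hK.preimage (continuous_subtype_val.comp AddCircle.continuous_toCircle))
    (fun x hx n hn => by rw [mem_preimage, hpre]; exact hpow _ hx n hn)
    (fun huniv => hne fun z hz => by
      obtain ⟨x, rfl⟩ := hsurj z hz
      exact huniv.symm.subset (mem_univ x))
  refine ⟨M, hM, fun z hz => ?_⟩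
  obtain ⟨x, rfl⟩ := hsurj z (hsub hz)
  rw [← hpre, h x hz]
  simp [e]

section RepresentingMeasure

variable {X : Type*} [TopologicalSpace X] [CompactSpace X] [T2Space X] [MeasurableSpace X]
  [BorelSpace X]

theorem exists_measure_integral_eq_of_nonneg (Λ : C(X, ℝ) →ₗ[ℝ] ℝ) (hΛ : ∀ u, 0 ≤ u → 0 ≤ Λ u) :
    ∃ μ : Measure X, IsFiniteMeasure μ ∧ ∀ u : C(X, ℝ), ∫ x, u x ∂μ = Λ u := by
  let Λc : C_c(X, ℝ) →ₚ[ℝ] ℝ := PositiveLinearMap.mk₀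
    { toFun := fun u => Λ u.toContinuousMap
      map_add' := fun u v => Λ.map_add u.toContinuousMap v.toContinuousMap
      map_smul' := fun c u => Λ.map_smul c u.toContinuousMap }
    fun u hu => hΛ u.toContinuousMap hu
  exact ⟨RealRMK.rieszMeasure Λc, inferInstance, fun u =>
    RealRMK.integral_rieszMeasure Λc ⟨u, HasCompactSupport.of_compactSpace u⟩⟩

theorem exists_measure_integral_eq_of_map_nonneg {M : Type*} [AddCommGroup M] [Module ℝ M]
    (ρ : M →ₗ[ℝ] C(X, ℝ)) (L : M →ₗ[ℝ] ℝ) (hone : 1 ∈ LinearMap.range ρ)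
    (hL : ∀ m, 0 ≤ ρ m → 0 ≤ L m) :
    ∃ μ : Measure X, IsFiniteMeasure μ ∧ ∀ m, ∫ x, ρ m x ∂μ = L m := by
  let f : C(X, ℝ) →ₗ.[ℝ] ℝ := (LinearMap.range (ρ.prod L)).toLinearPMap
  have hgraph : f.graph = LinearMap.range (ρ.prod L) := by
    refine Submodule.toLinearPMap_graph_eq _ ?_
    rintro _ ⟨m, rfl⟩ (hm : ρ m = 0)
    have hneg := hL (-m) (by rw [map_neg, hm, neg_zero])
    rw [map_neg] at hneg
    exact le_antisymm (neg_nonneg.1 hneg) (hL m hm.ge)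
  have hf : ∀ m, ∃ u : f.domain, (u : C(X, ℝ)) = ρ m ∧ f u = L m := fun m =>
    f.mem_graph_iff.1 (hgraph ▸ ⟨m, rfl⟩ : (ρ m, L m) ∈ f.graph)
  obtain ⟨Λ, hΛf, hΛ⟩ := riesz_extension (PointedCone.positive ℝ C(X, ℝ)) f
    (fun u hu => by
      obtain ⟨m, hm⟩ : ((u : C(X, ℝ)), f u) ∈ LinearMap.range (ρ.prod L) := hgraph ▸ f.mem_graph u
      obtain ⟨hmu, hmf⟩ : ρ m = u ∧ L m = f u := Prod.mk.inj hm
      exact hmf ▸ hL m (hmu ▸ hu))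
    (fun u => by
      obtain ⟨e, he⟩ := hone
      obtain ⟨v, hv, -⟩ := hf (‖u‖ • e)
      have hnonneg : 0 ≤ ‖u‖ • (1 : C(X, ℝ)) + u := ContinuousMap.le_def.2 fun x => by
        simpa using neg_le_iff_add_nonneg'.1 (neg_le_of_abs_le (u.norm_coe_le_norm x))
      exact ⟨v, by rwa [hv, map_smul, he]⟩)
  obtain ⟨μ, hμ, hint⟩ := exists_measure_integral_eq_of_nonneg Λ hΛ
  refine ⟨μ, hμ, fun m => ?_⟩
  obtain ⟨u, hu, hfu⟩ := hf m
  rw [hint, ← hfu, ← hΛf, hu]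

theorem compactSpace_frontier {Y : Type*} [PseudoMetricSpace Y] [ProperSpace Y] {s : Set Y}
    (hs : Bornology.IsBounded s) : CompactSpace (frontier s) :=
  isCompact_iff_compactSpace.1
    (hs.isCompact_closure.of_isClosed_subset isClosed_frontier frontier_subset_closure)

variable {O : Set ℂ}

theorem re_nonneg_of_forall_mem_frontier_re_nonneg (hO : Bornology.IsBounded O) {f : ℂ → ℂ}
    (hf : DiffContOnCl ℂ f O) (h : ∀ z ∈ frontier O, 0 ≤ (f z).re) {w : ℂ} (hw : w ∈ closure O) :
    0 ≤ (f w).re := by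
  have hexp : DiffContOnCl ℂ (fun z => Complex.exp (-f z)) O :=
    Complex.differentiable_exp.comp_diffContOnCl hf.neg
  have hle := Complex.norm_le_of_forall_mem_frontier_norm_le (C := 1) hO hexp
    (fun z hz => by simpa [Complex.norm_exp] using h z hz) hw
  simpa [Complex.norm_exp] using hle

theorem continuous_frontier_restrict {F : Type*} [NormedAddCommGroup F] [NormedSpace ℂ F]
    {f : ℂ → F} (hf : DiffContOnCl ℂ f O) : Continuous fun x : frontier O => f x :=
  continuousOn_iff_continuous_domRestrict.1 (hf.continuousOn.mono frontier_subset_closure)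

/-- The functions holomorphic in `O` and continuous on its closure, as a real vector space. -/
def diffContOnClSubmodule (O : Set ℂ) : Submodule ℝ (ℂ → ℂ) where
  carrier := {f | DiffContOnCl ℂ f O}
  add_mem' hf hg := hf.add hg
  zero_mem' := diffContOnCl_const
  smul_mem' c _ hf := hf.const_smul c

/-- The boundary values of the real part of a function holomorphic in `O`. -/
noncomputable def frontierRe (O : Set ℂ) : diffContOnClSubmodule O →ₗ[ℝ] C(frontier O, ℝ) where
  toFun f := ⟨fun x => (f.1 x).re, Complex.continuous_re.comp (continuous_frontier_restrict f.2)⟩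
  map_add' f g := by ext; simp
  map_smul' c f := by ext; simp

theorem exists_measure_frontier_integral_re_eq (hO : Bornology.IsBounded O) {w : ℂ}
    (hw : w ∈ closure O) :
    ∃ μ : Measure (frontier O), IsFiniteMeasure μ ∧
      ∀ f : ℂ → ℂ, DiffContOnCl ℂ f O → ∫ x : frontier O, (f x).re ∂μ = (f w).re := by
  have := compactSpace_frontier hO
  obtain ⟨μ, hμ, h⟩ := exists_measure_integral_eq_of_map_nonneg (frontierRe O)
    (Complex.reLm ∘ₗ LinearMap.proj (φ := fun _ : ℂ => ℂ) w ∘ₗ (diffContOnClSubmodule O).subtype)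
    ⟨⟨1, diffContOnCl_const⟩, by ext; simp [frontierRe]⟩
    (fun f hf => re_nonneg_of_forall_mem_frontier_re_nonneg hO f.2 (fun z hz => hf ⟨z, hz⟩) hw)
  exact ⟨μ, hμ, fun f hf => h ⟨f, hf⟩⟩

theorem exists_measure_frontier_integral_eq (hO : Bornology.IsBounded O) {w : ℂ}
    (hw : w ∈ closure O) (F : Type*) [NormedAddCommGroup F] [NormedSpace ℂ F] [CompleteSpace F] :
    ∃ μ : Measure (frontier O), IsFiniteMeasure μ ∧
      ∀ f : ℂ → F, DiffContOnCl ℂ f O → ∫ x : frontier O, f x ∂μ = f w := by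
  have := compactSpace_frontier hO
  obtain ⟨μ, hμ, hre⟩ := exists_measure_frontier_integral_re_eq hO hw
  refine ⟨μ, hμ, fun f hf => ?_⟩
  have hint : Integrable (fun x : frontier O => f x) μ :=
    (continuous_frontier_restrict hf).integrable_of_hasCompactSupport (.of_compactSpace _)
  have hdual : ∀ φ : StrongDual ℂ F, (φ (∫ x : frontier O, f x ∂μ)).re = (φ (f w)).re := fun φ => by
    rw [← φ.integral_comp_comm hint]
    exact (integral_re (φ.integrable_comp hint)).symm.trans
      (hre _ (φ.differentiable.comp_diffContOnCl hf))
  by_contra hne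
  obtain ⟨φ, hφ⟩ := SeparatingDual.exists_eq_one (R := ℂ) (sub_ne_zero.2 hne)
  have hzero : (φ ((∫ x : frontier O, f x ∂μ) - f w)).re = 0 := by
    rw [map_sub, Complex.sub_re, hdual φ, sub_self]
  rw [hφ] at hzero
  exact one_ne_zero hzero

end RepresentingMeasure

section MaximumModulus

-- On the circle `‖z - z₀‖ = δ`, where `conj (z - z₀) = δ ^ 2 / (z - z₀)`, the non-holomorphic
-- function `(z - z₀) * (‖z‖ ^ 2 - 1)` agrees with a quadratic polynomial.
theorem quadratic_eq_mul_norm_sq_sub_one {z₀ z : ℂ} {δ : ℝ} (hz : z ∈ sphere z₀ δ) :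
    star z₀ * (z - z₀) ^ 2 + (‖z₀‖ ^ 2 - 1 + δ ^ 2) * (z - z₀) + z₀ * δ ^ 2 =
      (z - z₀) * ((‖z‖ ^ 2 - 1 : ℝ) : ℂ) := by
  have hu : (z - z₀) * star (z - z₀) = (δ : ℂ) ^ 2 := by
    rw [← mem_sphere_iff_norm.1 hz]; exact Complex.mul_conj' _
  have hz₀ : z₀ * star z₀ = (‖z₀‖ : ℂ) ^ 2 := Complex.mul_conj' _
  have hzz : z * star z = (‖z‖ : ℂ) ^ 2 := Complex.mul_conj' _
  push_cast
  rw [← hzz, ← hz₀, ← hu, star_sub]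
  ring

theorem norm_center_mul_radius_mul_norm_le {F : Type*} [NormedAddCommGroup F] [NormedSpace ℂ F]
    {h : ℂ → F} {z₀ : ℂ} {δ C : ℝ} (hδ : 0 < δ) (hd : DiffContOnCl ℂ h (ball z₀ δ))
    (hC : ∀ z ∈ sphere z₀ δ, |‖z‖ - 1| * ‖h z‖ ≤ C) :
    ‖z₀‖ * δ * ‖h z₀‖ ≤ (‖z₀‖ + δ + 1) * C := by
  let q : ℂ → ℂ := fun z =>
    star z₀ * (z - z₀) ^ 2 + (‖z₀‖ ^ 2 - 1 + δ ^ 2) * (z - z₀) + z₀ * δ ^ 2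
  have hq : Differentiable ℂ q := by fun_prop
  have hqz : ∀ z ∈ sphere z₀ δ, ‖q z • h z‖ ≤ δ * ((‖z₀‖ + δ + 1) * C) := fun z hz => by
    have hz_le : ‖z‖ ≤ ‖z₀‖ + δ := by
      simpa [mem_sphere_iff_norm.1 hz] using norm_add_le z₀ (z - z₀)
    have : 0 ≤ C := (by positivity : (0 : ℝ) ≤ |‖z‖ - 1| * ‖h z‖).trans (hC z hz)
    calc ‖q z • h z‖ = δ * |‖z‖ ^ 2 - 1| * ‖h z‖ := by
          rw [norm_smul, show q z = _ from quadratic_eq_mul_norm_sq_sub_one hz, norm_mul,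
            mem_sphere_iff_norm.1 hz, Complex.norm_real, Real.norm_eq_abs]
      _ = δ * ((‖z‖ + 1) * (|‖z‖ - 1| * ‖h z‖)) := by
          rw [← one_pow 2, sq_sub_sq, abs_mul, one_pow, abs_of_nonneg (by positivity : 0 ≤ ‖z‖ + 1)]
          ring
      _ ≤ δ * ((‖z₀‖ + δ + 1) * C) := by gcongr; exact hC z hz
  have hle : ‖q z₀ • h z₀‖ ≤ δ * ((‖z₀‖ + δ + 1) * C) :=
    Complex.norm_le_of_forall_mem_frontier_norm_le isBounded_ball (hq.diffContOnCl.smul hd)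
      (by rwa [frontier_ball _ hδ.ne']) (subset_closure (mem_ball_self hδ))
  have hq₀ : ‖q z₀‖ = δ * (‖z₀‖ * δ) := by
    have : q z₀ = z₀ * δ ^ 2 := by simp only [q]; ring
    rw [this, norm_mul, norm_pow, Complex.norm_real, Real.norm_of_nonneg hδ.le]
    ring
  rw [norm_smul, hq₀, mul_assoc] at hle
  exact le_of_mul_le_mul_left hle hδ

section Liouville

variable {F : Type*} [NormedAddCommGroup F] [NormedSpace ℂ F] {h : ℂ → F} {C : ℝ}

theorem norm_sub_one_smul_le_of_norm_sub_one_lt (hd : DifferentiableOn ℂ h {1}ᶜ)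
    (hC : ∀ z ≠ 1, |‖z‖ - 1| * ‖h z‖ ≤ C) {z : ℂ} (hz : z ≠ 1) (hz' : ‖z - 1‖ < 1 / 2) :
    ‖(z - 1) • h z‖ ≤ 11 * C := by
  have hpos : 0 < ‖z - 1‖ := norm_sub_pos_iff.2 hz
  have hne : closedBall z (‖z - 1‖ / 2) ⊆ {1}ᶜ := by
    rintro w hw rfl
    rw [mem_closedBall_iff_norm, norm_sub_rev] at hw
    linarith
  have hmax := norm_center_mul_radius_mul_norm_le (half_pos hpos)
    (hd.mono (closure_ball_subset_closedBall.trans hne)).diffContOnCl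
    fun w hw => hC w (hne (sphere_subset_closedBall hw))
  have : 0 ≤ C := (by positivity : (0 : ℝ) ≤ |‖z‖ - 1| * ‖h z‖).trans (hC z hz)
  have hlower : 1 / 2 ≤ ‖z‖ := by
    have := norm_sub_le z (z - 1); rw [sub_sub_cancel, norm_one] at this; linarith
  have hupper : ‖z‖ ≤ 3 / 2 := by
    have := norm_add_le (z - 1) 1; rw [sub_add_cancel, norm_one] at this; linarith
  calc ‖(z - 1) • h z‖ = 4 * (1 / 2 * (‖z - 1‖ / 2) * ‖h z‖) := by rw [norm_smul]; ring
    _ ≤ 4 * (‖z‖ * (‖z - 1‖ / 2) * ‖h z‖) := by gcongr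
    _ ≤ 4 * ((‖z‖ + ‖z - 1‖ / 2 + 1) * C) := by gcongr
    _ ≤ 4 * ((3 / 2 + 1 / 2 / 2 + 1) * C) := by gcongr
    _ = 11 * C := by ring

theorem norm_sub_one_smul_le_of_two_le_norm (hC : ∀ z ≠ 1, |‖z‖ - 1| * ‖h z‖ ≤ C) {z : ℂ}
    (hz : 2 ≤ ‖z‖) : ‖(z - 1) • h z‖ ≤ 3 * C := by
  have hz₁ : z ≠ 1 := by rintro rfl; norm_num at hz
  calc ‖(z - 1) • h z‖ ≤ (‖z‖ + 1) * ‖h z‖ := by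
        rw [norm_smul]; gcongr; simpa using norm_sub_le z 1
    _ ≤ 3 * |‖z‖ - 1| * ‖h z‖ := by gcongr; rw [abs_of_pos] <;> linarith
    _ ≤ 3 * C := by rw [mul_assoc]; gcongr; exact hC z hz₁

theorem exists_forall_sub_one_smul_eq [CompleteSpace F] (hd : DifferentiableOn ℂ h {1}ᶜ)
    (hC : ∀ z ≠ 1, |‖z‖ - 1| * ‖h z‖ ≤ C) : ∃ c, ∀ z ≠ 1, (z - 1) • h z = c := by
  let k : ℂ → F := fun z => (z - 1) • h z
  have hk : DifferentiableOn ℂ k {1}ᶜ := by fun_prop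
  let K := Function.update k 1 (Filter.limUnder (nhdsWithin 1 {1}ᶜ) k)
  have hKk : ∀ z ≠ 1, K z = k z := fun z hz => Function.update_of_ne hz _ _
  have hK : Differentiable ℂ K := fun z => by
    rcases eq_or_ne z 1 with rfl | hz
    · have hnhds : ball (1 : ℂ) (1 / 2) ∈ nhds 1 := ball_mem_nhds _ (by norm_num)
      refine (Complex.differentiableOn_update_limUnder_of_bddAbove hnhds
        (hk.mono fun w hw => hw.2) ⟨11 * C, ?_⟩).differentiableAt hnhds
      rintro _ ⟨w, hw, rfl⟩
      exact norm_sub_one_smul_le_of_norm_sub_one_lt hd hC hw.2 (mem_ball_iff_norm.1 hw.1)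
    · refine ((hk z hz).differentiableAt (isOpen_ne.mem_nhds hz)).congr_of_eventuallyEq ?_
      filter_upwards [isOpen_ne.mem_nhds hz] with w hw using hKk w hw
  have hbounded : Bornology.IsBounded (range K) := by
    obtain ⟨R, hR⟩ :=
      ((isCompact_closedBall (0 : ℂ) 2).image hK.continuous).isBounded.exists_norm_le
    refine isBounded_iff_forall_norm_le.2 ⟨max R (3 * C), ?_⟩
    rintro _ ⟨z, rfl⟩
    rcases le_total ‖z‖ 2 with hz | hz
    · exact (hR _ ⟨z, by simpa using hz, rfl⟩).trans (le_max_left _ _)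
    · rw [hKk z (by rintro rfl; norm_num at hz)]
      exact (norm_sub_one_smul_le_of_two_le_norm hC hz).trans (le_max_right _ _)
  obtain ⟨c, hc⟩ := hK.exists_const_forall_eq_of_bounded hbounded
  exact ⟨c, fun z hz => (hKk z hz).symm.trans (hc z)⟩

end Liouville

end MaximumModulus

section Resolvent

theorem differentiableOn_resolvent {R : Type*} [NormedRing R] [NormedAlgebra ℂ R]
    [CompleteSpace R] (a : R) : DifferentiableOn ℂ (resolvent a) (resolventSet ℂ a) := fun _ hz =>
  (spectrum.hasDerivAt_resolvent_const_left hz).differentiableAt.differentiableWithinAt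

theorem eq_one_of_spectrum_subset_one_of_norm_resolvent_le {R : Type*} [NormedRing R]
    [NormedAlgebra ℂ R] [CompleteSpace R] {a : R} (ha : spectrum ℂ a ⊆ {1}) {C : ℝ}
    (hC : ∀ z : ℂ, z ≠ 1 → |‖z‖ - 1| * ‖resolvent a z‖ ≤ C) : a = 1 := by
  have hmem : ∀ z ≠ 1, z ∈ resolventSet ℂ a := fun z hz => of_not_not fun h => hz (ha h)
  obtain ⟨c, hc⟩ := exists_forall_sub_one_smul_eq ((differentiableOn_resolvent a).mono hmem) hC
  have hmul : ∀ z ≠ 1, c * (algebraMap ℂ R z - a) = (z - 1) • 1 := fun z hz => by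
    rw [← hc z hz, smul_mul_assoc]
    exact congrArg _ (Ring.inverse_mul_cancel _ (hmem z hz))
  have h₀ : c * a = 1 := by simpa using hmul 0 (by norm_num)
  have h₂ : c * 2 - c * a = 1 := by
    have h := hmul 2 (by norm_num)
    rwa [map_ofNat, mul_sub, show (2 : ℂ) - 1 = 1 by norm_num, one_smul] at h
  have hc₁ : c = 1 := by
    have h : (2 : ℂ) • c = (2 : ℂ) • 1 := by
      rw [two_smul, two_smul, ← mul_two, sub_eq_iff_eq_add.1 h₂, h₀]
    exact smul_right_injective R (two_ne_zero (α := ℂ)) h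
  rwa [hc₁, one_mul] at h₀

variable {E : Type*} [NormedAddCommGroup E] [NormedSpace ℂ E] {T : E →L[ℂ] E} {z l : ℂ}

theorem smul_resolvent_apply_sub_apply (hz : z ∈ resolventSet ℂ T) (x : E) :
    z • resolvent T z x - T (resolvent T z x) = x := by
  have h : (algebraMap ℂ (E →L[ℂ] E) z - T) * resolvent T z = 1 := Ring.mul_inverse_cancel _ hz
  simpa [Algebra.algebraMap_eq_smul_one] using DFunLike.congr_fun h x

theorem resolvent_apply_smul_sub_apply (hz : z ∈ resolventSet ℂ T) (x : E) :
    resolvent T z (z • x - T x) = x := by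
  have h : resolvent T z * (algebraMap ℂ (E →L[ℂ] E) z - T) = 1 := Ring.inverse_mul_cancel _ hz
  simpa [Algebra.algebraMap_eq_smul_one] using DFunLike.congr_fun h x

theorem mul_norm_resolvent_le_one {c : ℝ} (hz : z ∈ resolventSet ℂ T)
    (hc : ∀ x, c * ‖x‖ ≤ ‖z • x - T x‖) : c * ‖resolvent T z‖ ≤ 1 := by
  rcases le_or_gt c 0 with hc₀ | hc₀
  · exact (mul_nonpos_of_nonpos_of_nonneg hc₀ (norm_nonneg _)).trans zero_le_one
  · rw [← le_div_iff₀' hc₀]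
    refine ContinuousLinearMap.opNorm_le_bound _ (by positivity) fun x => ?_
    have h := hc (resolvent T z x)
    rw [smul_resolvent_apply_sub_apply hz] at h
    rwa [one_div_mul_eq_div, le_div_iff₀' hc₀]

theorem mem_resolventSet_of_mem_closure [CompleteSpace E] {c : ℝ} (hc : 0 < c)
    (hl : l ∈ closure (resolventSet ℂ T)) (hT : ∀ x, c * ‖x‖ ≤ ‖l • x - T x‖) :
    l ∈ resolventSet ℂ T := by
  obtain ⟨z, hz, hdist⟩ := Metric.mem_closure_iff.1 hl (c / 3) (by positivity)
  rw [dist_eq_norm] at hdist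
  have hlower : ∀ x, 2 * (c / 3) * ‖x‖ ≤ ‖z • x - T x‖ := fun x => by
    have htri : ‖l • x - T x‖ ≤ ‖z • x - T x‖ + ‖l - z‖ * ‖x‖ := by
      rw [← norm_smul, sub_smul]
      exact (norm_add_le _ _).trans' (by rw [sub_add_sub_cancel'])
    nlinarith [hT x, norm_nonneg x]
  have hsmall : ‖(z - l) • resolvent T z‖ < 1 := by
    calc ‖(z - l) • resolvent T z‖ ≤ c / 3 * ‖resolvent T z‖ := by
          rw [norm_smul, norm_sub_rev]; gcongr
      _ < 1 := by linarith [mul_norm_resolvent_le_one hz hlower]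
  have hfactor : algebraMap ℂ (E →L[ℂ] E) l - T =
      (algebraMap ℂ (E →L[ℂ] E) z - T) * (1 - (z - l) • resolvent T z) := by
    rw [mul_sub, mul_one, mul_smul_comm,
      show _ * resolvent T z = 1 from Ring.mul_inverse_cancel _ hz,
      ← Algebra.algebraMap_eq_smul_one, map_sub]
    abel
  rw [spectrum.mem_resolventSet_iff, hfactor]
  exact hz.mul (isUnit_one_sub_of_norm_lt_one hsmall)

end Resolvent

section Isometry

variable {E : Type*} [NormedAddCommGroup E] [NormedSpace ℂ E] {V : E →L[ℂ] E}

theorem abs_norm_sub_one_mul_norm_le (hV : ∀ x, ‖V x‖ = ‖x‖) (z : ℂ) (x : E) :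
    |‖z‖ - 1| * ‖x‖ ≤ ‖z • x - V x‖ :=
  calc |‖z‖ - 1| * ‖x‖ = |‖z • x‖ - ‖V x‖| := by
        rw [norm_smul, hV, ← sub_one_mul, abs_mul, abs_norm]
    _ ≤ ‖z • x - V x‖ := abs_norm_sub_norm_le _ _

variable [CompleteSpace E]

theorem norm_le_one_of_mem_spectrum (hV : ∀ x, ‖V x‖ ≤ ‖x‖) {z : ℂ} (hz : z ∈ spectrum ℂ V) :
    ‖z‖ ≤ 1 :=
  (spectrum.norm_le_norm_mul_of_mem hz).trans <| mul_le_one₀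
    (V.opNorm_le_bound zero_le_one fun x => (one_mul ‖x‖).symm ▸ hV x) (norm_nonneg _)
    ContinuousLinearMap.norm_id_le

theorem spectrum_subset_sphere_of_isometry (hV : ∀ x, ‖V x‖ = ‖x‖) (hu : IsUnit V) :
    spectrum ℂ V ⊆ sphere 0 1 := by
  obtain ⟨v, rfl⟩ := hu
  intro z hz
  have hz₀ : z ≠ 0 := spectrum.ne_zero_of_mem_of_unit hz
  have hinv : ∀ x, ‖(↑v⁻¹ : E →L[ℂ] E) x‖ ≤ ‖x‖ := fun x => by
    rw [← hV, ← mul_apply_eq_comp, v.mul_inv, one_apply_eq_self]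
  have hle : ‖z‖ ≤ 1 := norm_le_one_of_mem_spectrum (fun x => (hV x).le) hz
  have hle_inv : ‖z⁻¹‖ ≤ 1 := norm_le_one_of_mem_spectrum hinv
    ((spectrum.inv_mem_iff (r := Units.mk0 z hz₀)).1 hz)
  rw [norm_inv, inv_le_one₀ (norm_pos_iff.2 hz₀)] at hle_inv
  exact mem_sphere_zero_iff_norm.2 (le_antisymm hle hle_inv)

theorem sphere_subset_closure_resolventSet_of_isometry (hV : ∀ x, ‖V x‖ = ‖x‖) (hu : IsUnit V) :
    sphere 0 1 ⊆ closure (resolventSet ℂ V) := by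
  have hinterior : interior (spectrum ℂ V) = ∅ :=
    subset_empty_iff.1 ((interior_mono (spectrum_subset_sphere_of_isometry hV hu)).trans
      (interior_sphere (0 : ℂ) one_ne_zero).subset)
  have hcompl : (spectrum ℂ V)ᶜ = resolventSet ℂ V := compl_compl _
  rw [← hcompl, closure_compl, hinterior, compl_empty]
  exact subset_univ _

theorem eq_one_of_isometry_of_spectrum_subset_one (hV : ∀ x, ‖V x‖ = ‖x‖)
    (hs : spectrum ℂ V ⊆ {1}) : V = 1 :=
  eq_one_of_spectrum_subset_one_of_norm_resolvent_le hs fun z hz =>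
    mul_norm_resolvent_le_one (of_not_not fun h => hz (hs h)) (abs_norm_sub_one_mul_norm_le hV z)

end Isometry

section PowerMultiplicative

variable {B : Type*} [NormedCommRing B]

theorem norm_pow_succ_sub_pow_succ_le (hp : IsPowMul (norm : B → ℝ)) {x y : B} {r : ℝ}
    (hx : ‖x‖ ≤ r) (hy : ‖y‖ ≤ r) (n : ℕ) :
    ‖x ^ (n + 1) - y ^ (n + 1)‖ ≤ (n + 1) * r ^ n * ‖x - y‖ := by
  have hr : 0 ≤ r := (norm_nonneg x).trans hx
  induction n with
  | zero => simp
  | succ n ih =>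
    calc ‖x ^ (n + 2) - y ^ (n + 2)‖
        = ‖x ^ (n + 1) * (x - y) + (x ^ (n + 1) - y ^ (n + 1)) * y‖ := by ring_nf
      _ ≤ ‖x ^ (n + 1)‖ * ‖x - y‖ + ‖x ^ (n + 1) - y ^ (n + 1)‖ * ‖y‖ :=
        (norm_add_le _ _).trans (add_le_add (norm_mul_le _ _) (norm_mul_le _ _))
      _ ≤ r ^ (n + 1) * ‖x - y‖ + (n + 1) * r ^ n * ‖x - y‖ * r := by
        rw [hp x n.succ_pos]; gcongr
      _ = ((n + 1 : ℕ) + 1) * r ^ (n + 1) * ‖x - y‖ := by push_cast; ring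

variable [NormedAlgebra ℂ B] {V : B →L[ℂ] B}

theorem norm_le_mul_norm_smul_sub_apply (hp : IsPowMul (norm : B → ℝ)) (hV : ∀ b, ‖V b‖ = ‖b‖)
    (hVpow : ∀ b (n : ℕ), V (b ^ n) = V b ^ n) {l : ℂ} (hl : ‖l‖ = 1) {n : ℕ}
    (hln : l ^ (n + 1) ∈ resolventSet ℂ V) (b : B) :
    ‖b‖ ≤ (n + 1) * ‖resolvent V (l ^ (n + 1))‖ * ‖l • b - V b‖ := by
  set R := resolvent V (l ^ (n + 1)) with hR
  rcases (norm_nonneg b).eq_or_lt with hb | hb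
  · rw [← hb]; positivity
  refine le_of_mul_le_mul_left ?_ (pow_pos hb n)
  calc ‖b‖ ^ n * ‖b‖ = ‖b ^ (n + 1)‖ := by rw [hp b n.succ_pos, pow_succ]
    _ = ‖R ((l • b) ^ (n + 1) - V b ^ (n + 1))‖ := by
      rw [smul_pow, ← hVpow, hR, resolvent_apply_smul_sub_apply hln]
    _ ≤ ‖R‖ * ‖(l • b) ^ (n + 1) - V b ^ (n + 1)‖ := R.le_opNorm _
    _ ≤ ‖R‖ * ((n + 1) * ‖b‖ ^ n * ‖l • b - V b‖) := by
      gcongr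
      exact norm_pow_succ_sub_pow_succ_le hp (by rw [norm_smul, hl, one_mul]) (hV b).le n
    _ = ‖b‖ ^ n * ((n + 1) * ‖R‖ * ‖l • b - V b‖) := by ring

variable [CompleteSpace B]

theorem pow_succ_mem_spectrum (hp : IsPowMul (norm : B → ℝ)) (hV : ∀ b, ‖V b‖ = ‖b‖)
    (hu : IsUnit V) (hVpow : ∀ b (n : ℕ), V (b ^ n) = V b ^ n) {l : ℂ} (hl : l ∈ spectrum ℂ V)
    (n : ℕ) : l ^ (n + 1) ∈ spectrum ℂ V := by
  have hsphere : l ∈ sphere (0 : ℂ) 1 := spectrum_subset_sphere_of_isometry hV hu hl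
  intro hln
  set C : ℝ := (n + 1) * ‖resolvent V (l ^ (n + 1))‖ + 1
  have hC₀ : 0 < C := by positivity
  refine hl (mem_resolventSet_of_mem_closure (inv_pos.2 hC₀)
    (sphere_subset_closure_resolventSet_of_isometry hV hu hsphere) fun b => ?_)
  rw [inv_mul_le_iff₀ hC₀]
  refine (norm_le_mul_norm_smul_sub_apply hp hV hVpow (mem_sphere_zero_iff_norm.1 hsphere)
    hln b).trans ?_
  gcongr
  exact (lt_add_one _).le

theorem exists_pow_eq_one_of_not_sphere_subset_spectrum (hp : IsPowMul (norm : B → ℝ))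
    (hV : ∀ b, ‖V b‖ = ‖b‖) (hu : IsUnit V) (hVpow : ∀ b (n : ℕ), V (b ^ n) = V b ^ n)
    (hne : ¬ sphere 0 1 ⊆ spectrum ℂ V) : ∃ M : ℕ, 0 < M ∧ V ^ M = 1 := by
  obtain ⟨M, hM, hroot⟩ := exists_pos_forall_pow_eq_one (spectrum.isClosed V)
    (spectrum_subset_sphere_of_isometry hV hu)
    (fun l hl n hn => Nat.succ_pred_eq_of_pos hn ▸ pow_succ_mem_spectrum hp hV hu hVpow hl n.pred)
    hne
  have hVM : ∀ n b, ‖(V ^ n) b‖ = ‖b‖ := fun n => by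
    induction n with
    | zero => simp
    | succ n ih => intro b; rw [pow_succ, mul_apply_eq_comp, ih, hV]
  refine ⟨M, hM, eq_one_of_isometry_of_spectrum_subset_one (hVM M) ?_⟩
  rw [spectrum.map_pow_of_pos V hM]
  rintro _ ⟨l, hl, rfl⟩
  exact hroot l hl

end PowerMultiplicative

section Intertwining

variable {A B : Type*} [NormedAddCommGroup A] [NormedSpace ℂ A] [NormedAddCommGroup B]
  [NormedSpace ℂ B] {U : A →L[ℂ] A} {V : B →L[ℂ] B} {i : A →L[ℂ] B}

theorem map_pow_apply_of_intertwining (hiU : ∀ a, i (U a) = V (i a)) (n : ℕ) (a : A) :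
    i ((U ^ n) a) = (V ^ n) (i a) := by
  induction n generalizing a with
  | zero => rfl
  | succ n ih => rw [pow_succ, pow_succ, mul_apply_eq_comp, mul_apply_eq_comp, ih, hiU]

theorem map_resolvent_apply_of_intertwining (hiU : ∀ a, i (U a) = V (i a)) {z : ℂ}
    (hzU : z ∈ resolventSet ℂ U) (hzV : z ∈ resolventSet ℂ V) (a : A) :
    i (resolvent U z a) = resolvent V z (i a) := by
  rw [← resolvent_apply_smul_sub_apply hzV (i (resolvent U z a)), ← hiU, ← map_smul, ← map_sub,
    smul_resolvent_apply_sub_apply hzU]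

theorem mem_resolventSet_of_map_apply_eq_resolvent (hi : Function.Injective i)
    (hiU : ∀ a, i (U a) = V (i a)) {w : ℂ} (hw : w ∈ resolventSet ℂ V) {S : A →L[ℂ] A}
    (hS : ∀ a, i (S a) = resolvent V w (i a)) : w ∈ resolventSet ℂ U := by
  refine isUnit_iff_exists.2 ⟨S, ?_, ?_⟩ <;> ext a <;> apply hi
  · simpa [Algebra.algebraMap_eq_smul_one, hS, hiU] using smul_resolvent_apply_sub_apply hw (i a)
  · simpa [Algebra.algebraMap_eq_smul_one, hS, hiU] using resolvent_apply_smul_sub_apply hw (i a)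

variable [CompleteSpace A]

theorem closure_subset_resolventSet_of_frontier_subset [CompleteSpace B]
    (hi : Function.Injective i) (hiU : ∀ a, i (U a) = V (i a)) {O : Set ℂ}
    (hO : Bornology.IsBounded O) (hOV : closure O ⊆ resolventSet ℂ V)
    (hOU : frontier O ⊆ resolventSet ℂ U) : closure O ⊆ resolventSet ℂ U := by
  intro w hw
  obtain ⟨μ, hμ, hrepr⟩ := exists_measure_frontier_integral_eq hO hw B
  have := compactSpace_frontier hO
  have hint : Integrable (fun x : frontier O => resolvent U (x : ℂ)) μ :=
    (continuousOn_iff_continuous_domRestrict.1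
      ((differentiableOn_resolvent U).continuousOn.mono hOU)).integrable_of_hasCompactSupport
      (.of_compactSpace _)
  refine mem_resolventSet_of_map_apply_eq_resolvent hi hiU (hOV hw)
    (S := ∫ x : frontier O, resolvent U (x : ℂ) ∂μ) fun a => ?_
  have hdiff : DiffContOnCl ℂ (fun z => resolvent V z (i a)) O :=
    (((differentiableOn_resolvent V).mono hOV).clm_apply
      (differentiableOn_const _)).diffContOnCl
  calc i ((∫ x : frontier O, resolvent U (x : ℂ) ∂μ) a)
      = ∫ x : frontier O, i (resolvent U (x : ℂ) a) ∂μ := by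
        rw [ContinuousLinearMap.integral_apply hint,
          i.integral_comp_comm (hint.apply_continuousLinearMap a)]
    _ = ∫ x : frontier O, resolvent V (x : ℂ) (i a) ∂μ := integral_congr_ae <| .of_forall fun x =>
        map_resolvent_apply_of_intertwining hiU (hOU x.2) (hOV (frontier_subset_closure x.2)) a
    _ = resolvent V w (i a) := hrepr _ hdiff

theorem subset_resolventSet_of_isCompact_of_disjoint [CompleteSpace B] (hi : Function.Injective i)
    (hiU : ∀ a, i (U a) = V (i a)) {K C : Set ℂ} (hK : IsCompact K) (hC : IsClosed C)
    (hKC : Disjoint K C) (hKV : Disjoint K (spectrum ℂ V)) (hU : spectrum ℂ U ⊆ K ∪ C) :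
    K ⊆ resolventSet ℂ U := by
  obtain ⟨O, hO, hKO, hclosure, hcompact⟩ := exists_open_between_and_isCompact_closure hK
    (hC.union (spectrum.isClosed V)).isOpen_compl (hKC.union_right hKV).subset_compl_right
  refine hKO.trans <| subset_closure.trans <| closure_subset_resolventSet_of_frontier_subset hi hiU
    (hcompact.isBounded.subset subset_closure)
    (fun z hz => of_not_not fun h => hclosure hz (.inr h)) fun z hz => of_not_not fun h => ?_
  rcases hU h with hzK | hzC
  · exact hO.inter_frontier_eq.subset ⟨hKO hzK, hz⟩
  · exact hclosure (frontier_subset_closure hz) (.inl hzC)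

theorem exists_norm_map_resolvent_apply_le (hiU : ∀ a, i (U a) = V (i a))
    (hV : ∀ b, ‖V b‖ = ‖b‖) {l : ℂ} (hl₀ : l ≠ 0) (hl : l ∈ resolventSet ℂ U) :
    ∃ C > 0, ∀ a, ‖i (resolvent U l a)‖ ≤ C * ‖i a‖ := by
  obtain ⟨δ, hδ, hball⟩ :=
    nhds_basis_closedBall.mem_iff.1 ((spectrum.isOpen_resolventSet U).mem_nhds hl)
  have hlδ : 0 < ‖l‖ * δ := mul_pos (norm_pos_iff.2 hl₀) hδ
  refine ⟨(‖l‖ + δ + 1) / (‖l‖ * δ), by positivity, fun a => ?_⟩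
  have hdiff : DiffContOnCl ℂ (fun z => i (resolvent U z a)) (ball l δ) :=
    i.differentiable.comp_diffContOnCl (((differentiableOn_resolvent U).mono
      (closure_ball_subset_closedBall.trans hball)).clm_apply
        (differentiableOn_const a)).diffContOnCl
  have hbound : ∀ z ∈ sphere l δ, |‖z‖ - 1| * ‖i (resolvent U z a)‖ ≤ ‖i a‖ := fun z hz => by
    have h := abs_norm_sub_one_mul_norm_le hV z (i (resolvent U z a))
    rwa [← hiU, ← map_smul, ← map_sub,
      smul_resolvent_apply_sub_apply (hball (sphere_subset_closedBall hz))] at h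
  rw [div_mul_eq_mul_div, le_div_iff₀' hlδ]
  exact norm_center_mul_radius_mul_norm_le hδ hdiff hbound

theorem mem_resolventSet_of_intertwining_of_denseRange [CompleteSpace B] (hdense : DenseRange i)
    (hiU : ∀ a, i (U a) = V (i a)) (hV : ∀ b, ‖V b‖ = ‖b‖) (hu : IsUnit V) {l : ℂ}
    (hl : l ∈ sphere (0 : ℂ) 1) (hlU : l ∈ resolventSet ℂ U) : l ∈ resolventSet ℂ V := by
  obtain ⟨C, hC, hbound⟩ :=
    exists_norm_map_resolvent_apply_le hiU hV (ne_of_mem_sphere hl one_ne_zero) hlU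
  refine mem_resolventSet_of_mem_closure (inv_pos.2 hC)
    (sphere_subset_closure_resolventSet_of_isometry hV hu hl) fun b => ?_
  refine hdense.induction_on (p := fun b => C⁻¹ * ‖b‖ ≤ ‖l • b - V b‖) b
    (isClosed_le (by fun_prop) (by fun_prop)) fun a => ?_
  have h := hbound (l • a - U a)
  rwa [resolvent_apply_smul_sub_apply hlU, map_sub, map_smul, hiU, ← inv_mul_le_iff₀ hC] at h

end Intertwining

theorem isPreconnected_of_forall_closed_superset {X : Type*} [TopologicalSpace X] {s t : Set X}
    (ht : IsPreconnected t) (hts : t ⊆ s)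
    (h : ∀ u v, IsClosed u → IsClosed v → s ⊆ u ∪ v → s ∩ (u ∩ v) = ∅ → t ⊆ u → s ⊆ u) :
    IsPreconnected s := by
  refine isPreconnected_iff_subset_of_disjoint_closed.2 fun u v hu hv hsub hdisj => ?_
  refine (isPreconnected_iff_subset_of_disjoint_closed.1 ht u v hu hv (hts.trans hsub)
    (subset_empty_iff.1 ((inter_subset_inter_left _ hts).trans hdisj.subset))).imp
    (h u v hu hv hsub hdisj) (h v u hv hu ?_ ?_)
  · rwa [union_comm]
  · rwa [inter_comm v u]

section PowerMultiplicativeModel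

variable {A B : Type*} [NormedAddCommGroup A] [NormedSpace ℂ A] [CompleteSpace A]
  [NormedCommRing B] [NormedAlgebra ℂ B] [CompleteSpace B] {U : A →L[ℂ] A} {V : B →L[ℂ] B}
  {i : A →L[ℂ] B}

theorem sphere_subset_spectrum_of_forall_pow_ne_one (hi : Function.Injective i)
    (hdense : DenseRange i) (hiU : ∀ a, i (U a) = V (i a)) (hp : IsPowMul (norm : B → ℝ))
    (hV : ∀ b, ‖V b‖ = ‖b‖) (hu : IsUnit V) (hVpow : ∀ b (n : ℕ), V (b ^ n) = V b ^ n)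
    (hU : ∀ n : ℕ, 0 < n → U ^ n ≠ 1) : sphere 0 1 ⊆ spectrum ℂ U := by
  have hsV : sphere 0 1 ⊆ spectrum ℂ V := by
    by_contra hne
    obtain ⟨M, hM, hVM⟩ := exists_pow_eq_one_of_not_sphere_subset_spectrum hp hV hu hVpow hne
    refine hU M hM (ContinuousLinearMap.ext fun a => hi ?_)
    rw [map_pow_apply_of_intertwining hiU, hVM]
    rfl
  exact fun l hl hlU =>
    hsV hl (mem_resolventSet_of_intertwining_of_denseRange hdense hiU hV hu hl hlU)

theorem isConnected_spectrum_of_intertwining (hi : Function.Injective i)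
    (hdense : DenseRange i) (hiU : ∀ a, i (U a) = V (i a)) (hp : IsPowMul (norm : B → ℝ))
    (hV : ∀ b, ‖V b‖ = ‖b‖) (hu : IsUnit V) (hVpow : ∀ b (n : ℕ), V (b ^ n) = V b ^ n)
    (hU : ∀ n : ℕ, 0 < n → U ^ n ≠ 1) : IsConnected (spectrum ℂ U) := by
  have hcircle := sphere_subset_spectrum_of_forall_pow_ne_one hi hdense hiU hp hV hu hVpow hU
  have hpreconn : IsPreconnected (sphere (0 : ℂ) 1) :=
    isPreconnected_sphere (by simp [Complex.rank_real_complex]) 0 1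
  refine ⟨⟨1, hcircle (by simp)⟩, isPreconnected_of_forall_closed_superset hpreconn hcircle
    fun u v hu' hv hsub hdisj hcu => ?_⟩
  have hresolvent : spectrum ℂ U ∩ v ⊆ resolventSet ℂ U :=
    subset_resolventSet_of_isCompact_of_disjoint hi hiU ((spectrum.isCompact U).inter_right hv) hu'
      (disjoint_left.2 fun z hz hzu => hdisj.subset ⟨hz.1, hzu, hz.2⟩)
      (disjoint_left.2 fun z hz hzV =>
        hdisj.subset ⟨hz.1, hcu (spectrum_subset_sphere_of_isometry hV hu hzV), hz.2⟩)
      (fun z hz => (hsub hz).symm.imp_left (⟨hz, ·⟩))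
  exact fun z hz => (hsub hz).resolve_right fun hzv => hz (hresolvent ⟨hz, hzv⟩)

end PowerMultiplicativeModel

section UniformClosure

theorem isPowMul_norm_continuousMap {X 𝕜 : Type*} [TopologicalSpace X] [CompactSpace X]
    [NormedDivisionRing 𝕜] : IsPowMul (norm : C(X, 𝕜) → ℝ) := fun f n hn => by
  suffices h : ‖f ^ n‖₊ = ‖f‖₊ ^ n from congrArg NNReal.toReal h
  rw [f.nnnorm_eq_iSup_nnnorm, NNReal.iSup_pow_of_ne_zero (Nat.one_le_iff_ne_zero.1 hn),
    ContinuousMap.nnnorm_eq_iSup_nnnorm]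
  simp only [ContinuousMap.pow_apply, nnnorm_pow]

variable {A A' A'' : Type*} [NormedCommRing A] [NormedAlgebra ℂ A] [CompleteSpace A]
  [NormedCommRing A'] [NormedAlgebra ℂ A'] [CompleteSpace A']
  [NormedCommRing A''] [NormedAlgebra ℂ A''] [CompleteSpace A'']

/-- The continuous map of character spaces `m ↦ m ∘ e` induced by an algebra homomorphism `e`. -/
noncomputable def characterSpaceComap (e : A →ₐ[ℂ] A') :
    C(characterSpace ℂ A', characterSpace ℂ A) where
  toFun m := CharacterSpace.equivAlgHom.symm ((CharacterSpace.equivAlgHom m).comp e)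
  continuous_toFun := Continuous.subtype_mk (WeakDual.continuous_of_continuous_eval fun a =>
    map_continuous (gelfandTransform ℂ A' (e a))) _

variable (A) in
/-- The uniform closure of the algebra of Gelfand transforms. -/
noncomputable def gelfandClosure : Subalgebra ℂ C(characterSpace ℂ A, ℂ) :=
  (gelfandTransform ℂ A).range.topologicalClosure

instance : CompleteSpace (gelfandClosure A) :=
  (Subalgebra.isClosed_topologicalClosure _).completeSpace_coe

theorem gelfandTransform_mem_gelfandClosure (a : A) : gelfandTransform ℂ A a ∈ gelfandClosure A :=
  subset_closure ⟨a, rfl⟩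

theorem continuous_gelfandTransform : Continuous (gelfandTransform ℂ A) :=
  AddMonoidHomClass.continuous_of_bound _ ‖(1 : A)‖ fun a =>
    (ContinuousMap.norm_le _ (by positivity)).2 fun m =>
      (spectrum.norm_le_norm_mul_of_mem (CharacterSpace.apply_mem_spectrum m a)).trans_eq
        (mul_comm _ _)

variable (A) in
/-- The Gelfand transform, as a map into the uniform closure of its range. -/
noncomputable def toGelfandClosure : A →L[ℂ] gelfandClosure A where
  toLinearMap :=
    ((gelfandTransform ℂ A).codRestrict _ gelfandTransform_mem_gelfandClosure).toLinearMap
  cont := continuous_gelfandTransform.subtype_mk _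

theorem toGelfandClosure_injective (hA : (⊥ : Ideal A).jacobson = ⊥) :
    Function.Injective (toGelfandClosure A) := by
  refine (injective_iff_map_eq_zero _).2 fun a ha => ?_
  have hzero : ∀ m : characterSpace ℂ A, m a = 0 := fun m =>
    congrArg (fun f : gelfandClosure A => f.1 m) ha
  suffices a ∈ (⊥ : Ideal A).jacobson by rwa [hA] at this
  refine Ideal.mem_jacobson_bot.2 fun y => by_contra fun hunit => ?_
  have : Nontrivial A := not_subsingleton_iff_nontrivial.1 fun _ => hunit (isUnit_of_subsingleton _)
  obtain ⟨m, hm⟩ := CharacterSpace.exists_apply_eq_zero hunit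
  simp [hzero m] at hm

variable (A) in
theorem denseRange_toGelfandClosure : DenseRange (toGelfandClosure A) := fun f => by
  rw [Topology.IsInducing.subtypeVal.closure_eq_preimage_closure_image]
  refine closure_mono ?_ f.2
  rintro _ ⟨a, rfl⟩
  exact ⟨toGelfandClosure A a, ⟨a, rfl⟩, rfl⟩

theorem comp_characterSpaceComap_mem_gelfandClosure (e : A →ₐ[ℂ] A') (f : gelfandClosure A) :
    f.1.comp (characterSpaceComap e) ∈ gelfandClosure A' := by
  refine map_mem_closure (f := fun g => g.comp (characterSpaceComap e))
    (ContinuousMap.continuous_precomp _) f.2 ?_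
  rintro _ ⟨a, rfl⟩
  exact ⟨e a, rfl⟩

/-- Composition with `characterSpaceComap e`: the continuous extension to the uniform closures of
the map that `e` induces on Gelfand transforms. -/
noncomputable def gelfandClosureMap (e : A →ₐ[ℂ] A') :
    gelfandClosure A →A[ℂ] gelfandClosure A' where
  toAlgHom := ((ContinuousMap.compRightAlgHom ℂ ℂ (characterSpaceComap e)).comp
    (gelfandClosure A).val).codRestrict _ (comp_characterSpaceComap_mem_gelfandClosure e)
  cont := ((ContinuousMap.continuous_precomp _).comp continuous_subtype_val).subtype_mk _

theorem gelfandClosureMap_id : gelfandClosureMap (.id ℂ A) = .id ℂ (gelfandClosure A) := rfl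

theorem gelfandClosureMap_comp (e : A →ₐ[ℂ] A') (e' : A' →ₐ[ℂ] A'') :
    gelfandClosureMap (e'.comp e) = (gelfandClosureMap e').comp (gelfandClosureMap e) := rfl

theorem gelfandClosureMap_toGelfandClosure (e : A →ₐ[ℂ] A') (a : A) :
    gelfandClosureMap e (toGelfandClosure A a) = toGelfandClosure A' (e a) := rfl

theorem norm_gelfandClosureMap_le (e : A →ₐ[ℂ] A') (f : gelfandClosure A) :
    ‖gelfandClosureMap e f‖ ≤ ‖f‖ :=
  (ContinuousMap.norm_le (gelfandClosureMap e f).1 (norm_nonneg _)).2 fun _ =>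
    f.1.norm_coe_le_norm _

theorem gelfandClosureMap_symm_apply_gelfandClosureMap (e : A ≃ₐ[ℂ] A') (f : gelfandClosure A) :
    gelfandClosureMap (e.symm : A' →ₐ[ℂ] A) (gelfandClosureMap (e : A →ₐ[ℂ] A') f) = f := by
  rw [← ContinuousAlgHom.comp_apply, ← gelfandClosureMap_comp, e.symm_comp, gelfandClosureMap_id,
    ContinuousAlgHom.id_apply]

theorem norm_gelfandClosureMap_algEquiv (e : A ≃ₐ[ℂ] A') (f : gelfandClosure A) :
    ‖gelfandClosureMap (e : A →ₐ[ℂ] A') f‖ = ‖f‖ := by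
  refine le_antisymm (norm_gelfandClosureMap_le _ f) ?_
  conv_lhs => rw [← gelfandClosureMap_symm_apply_gelfandClosureMap e f]
  exact norm_gelfandClosureMap_le _ _

theorem isUnit_gelfandClosureMap_algEquiv (e : A ≃ₐ[ℂ] A) :
    IsUnit (gelfandClosureMap (e : A →ₐ[ℂ] A)).toContinuousLinearMap :=
  isUnit_iff_exists.2 ⟨(gelfandClosureMap (e.symm : A →ₐ[ℂ] A)).toContinuousLinearMap,
    ContinuousLinearMap.ext (gelfandClosureMap_symm_apply_gelfandClosureMap e.symm),
    ContinuousLinearMap.ext (gelfandClosureMap_symm_apply_gelfandClosureMap e)⟩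

end UniformClosure

/-- If `U` is an automorphism of a commutative semi-simple Banach algebra with
`U ^ n ≠ I` for all positive `n`, then the spectrum of `U` is a connected subset of `ℂ`. -/
theorem stmt2 {A : Type*} [NormedCommRing A] [NormedAlgebra ℂ A] [CompleteSpace A]
    (hss : (⊥ : Ideal A).jacobson = ⊥)
    (U : A →L[ℂ] A) (hmul : ∀ x y : A, U (x * y) = U x * U y)
    (hbij : Function.Bijective U)
    (hnp : ∀ n : ℕ, 0 < n → U ^ n ≠ 1) :
    IsConnected (spectrum ℂ U) := by
  have hone : U 1 = 1 := by
    obtain ⟨x, hx⟩ := hbij.2 1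
    have h := hmul 1 x
    rwa [one_mul, hx, mul_one, eq_comm] at h
  let e : A ≃ₐ[ℂ] A := AlgEquiv.ofBijective (AlgHom.ofLinearMap U.toLinearMap hone hmul) hbij
  let V := (gelfandClosureMap (e : A →ₐ[ℂ] A)).toContinuousLinearMap
  have hintertwine : ∀ a, toGelfandClosure A (U a) = V (toGelfandClosure A a) := fun a =>
    (gelfandClosureMap_toGelfandClosure (e : A →ₐ[ℂ] A) a).symm
  have hpow : IsPowMul (norm : gelfandClosure A → ℝ) := fun f _ hn =>
    isPowMul_norm_continuousMap f.1 hn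
  have hVpow : ∀ (f : gelfandClosure A) (n : ℕ), V (f ^ n) = V f ^ n :=
    map_pow (gelfandClosureMap (e : A →ₐ[ℂ] A))
  exact isConnected_spectrum_of_intertwining (B := gelfandClosure A) (V := V)
    (toGelfandClosure_injective hss) (denseRange_toGelfandClosure A) hintertwine hpow
    (norm_gelfandClosureMap_algEquiv e) (isUnit_gelfandClosureMap_algEquiv e) hVpow hnp
end

section
/- Let T be an invertible bounded operator on a Banach space X such that σ(Ť) = 𝕋 ⊆ σ(T) for an associated quotient/restriction operator Ť on a Banach space Z with a bounded intertwining map π : X → Z satisfying ‖π(T^n f)‖ ≤ ‖T^n f‖ for all n and f (e.g. π norm-nonincreasing). Then σ(T) has no connected component entirely contained in the open unit disc; in particular if in addition σ(T) is rotation-symmetric near 𝕋 as given, σ(T) is connected. -/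
/-!
Every connected component of `σ(T)` meets `σ(Ť)`. Otherwise some component lies in a compact set
`K`, open and closed in `σ(T)`, with a neighbourhood `V ⊆ ρ(Ť)` such that `V \ K ⊆ ρ(T)`. The
holomorphic function `z ↦ (z - Ť)⁻¹ p` on `V` is recovered on `K` by a Cauchy integral over
`V \ K`, where it equals `p (z - T)⁻¹`. Pulling `p` out of the integral gives
`(μ - Ť)⁻¹ p = p S` for `μ ∈ K` and some bounded `S`, and injectivity of `p` makes `S` an inverse
of `μ - T`.

To avoid constructing a contour around `K`, the Cauchy integral is taken in the Cauchy–Pompeiu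
form, against `∂χ/∂z̄` for a cutoff `χ` equal to `1` near `K`.
-/

open Complex Filter MeasureTheory Set Topology
open scoped Real

section PolarCoordinates

variable {F E : Type*} [NormedAddCommGroup F] [NormedSpace ℝ F] [NormedAddCommGroup E]
  [NormedSpace ℝ E]

theorem integrableOn_polarCoord_target_clm_apply {L : ℂ → F →L[ℝ] E} (hL : Continuous L)
    (hc : HasCompactSupport L) {w : ℝ → F} (hw : Continuous w) :
    IntegrableOn (fun p : ℝ × ℝ => L (p.1 • exp (p.2 * I)) (w p.2)) polarCoord.target := by
  obtain ⟨R, hR⟩ := hc.isCompact.isBounded.subset_closedBall 0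
  have hbox : IntegrableOn (fun p : ℝ × ℝ => L (p.1 • exp (p.2 * I)) (w p.2))
      (Icc 0 R ×ˢ Icc (-π) π) :=
    (by fun_prop : Continuous _).continuousOn.integrableOn_compact
      (isCompact_Icc.prod isCompact_Icc)
  refine hbox.of_forall_sdiff_eq_zero polarCoord.open_target.measurableSet ?_
  rintro ⟨r, θ⟩ ⟨⟨hr, hθ⟩, hout⟩
  have hrR : R < r :=
    lt_of_not_ge fun hle => hout ⟨⟨le_of_lt hr, hle⟩, Ioo_subset_Icc_self hθ⟩
  have hnotMem : r • exp (θ * I) ∉ tsupport L := fun hmem => by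
    have hnorm : |r| ≤ R := by simpa [norm_exp_ofReal_mul_I] using hR hmem
    exact hrR.not_ge ((le_abs_self r).trans hnorm)
  simp only [image_eq_zero_of_notMem_tsupport hnotMem, zero_apply]

variable [CompleteSpace E]

theorem integral_Ioi_fderiv_smul_apply {h : F → E} (hh : ContDiff ℝ 1 h)
    (hc : HasCompactSupport h) {v : F} (hv : v ≠ 0) :
    ∫ r in Ioi (0 : ℝ), fderiv ℝ h (r • v) v = -h 0 := by
  have hderiv (r : ℝ) : HasDerivAt (fun s : ℝ => h (s • v)) (fderiv ℝ h (r • v) v) r := by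
    simpa [Function.comp_def] using (hh.differentiable one_ne_zero (r • v)).hasFDerivAt
      |>.comp_hasDerivAt r ((hasDerivAt_id r).smul_const v)
  have hray := HasCompactSupport.integral_Ioi_deriv_eq (f := fun s : ℝ => h (s • v))
    (by fun_prop) (hc.comp_isClosedEmbedding (isClosedEmbedding_smul_left hv)) 0
  simpa only [(hderiv _).deriv, zero_smul] using hray

theorem integral_fderiv_circleMap_eq_zero {h : ℂ → E} (hh : ContDiff ℝ 1 h) (c : ℂ) (r : ℝ) :
    ∫ θ in -π..π, fderiv ℝ h (circleMap c r θ) (circleMap 0 r θ * I) = 0 := by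
  have hderiv (θ : ℝ) : HasDerivAt (fun t => h (circleMap c r t))
      (fderiv ℝ h (circleMap c r θ) (circleMap 0 r θ * I)) θ :=
    (hh.differentiable one_ne_zero _).hasFDerivAt.comp_hasDerivAt θ (hasDerivAt_circleMap c r θ)
  have hcont : Continuous fun θ => fderiv ℝ h (circleMap c r θ) (circleMap 0 r θ * I) := by
    have := hh.continuous_fderiv one_ne_zero
    fun_prop
  have hperiod : circleMap c r π = circleMap c r (-π) := by
    rw [← periodic_circleMap c r (-π), two_mul, neg_add_cancel_left]
  rw [intervalIntegral.integral_eq_sub_of_hasDerivAt (fun θ _ => hderiv θ)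
    (hcont.intervalIntegrable _ _), hperiod, sub_self]

theorem setIntegral_polarCoord_fderiv_radial {h : ℂ → E} (hh : ContDiff ℝ 1 h)
    (hc : HasCompactSupport h) :
    ∫ p in polarCoord.target, fderiv ℝ h (p.1 • exp (p.2 * I)) (exp (p.2 * I)) =
      -((2 * π) • h 0) := by
  have hint := integrableOn_polarCoord_target_clm_apply (hh.continuous_fderiv one_ne_zero)
    (hc.fderiv ℝ) (w := fun θ : ℝ => exp (θ * I)) (by fun_prop)
  rw [polarCoord_target, Measure.volume_eq_prod, ← setIntegral_prod_swap]
  refine (setIntegral_prod _ hint.swap).trans ?_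
  simp only [Function.comp_apply, Prod.swap_prod_mk,
    integral_Ioi_fderiv_smul_apply hh hc (exp_ne_zero _)]
  simp [← two_mul, Real.pi_pos.le]

theorem setIntegral_polarCoord_fderiv_angular {h : ℂ → E} (hh : ContDiff ℝ 1 h)
    (hc : HasCompactSupport h) :
    ∫ p in polarCoord.target, fderiv ℝ h (p.1 • exp (p.2 * I)) (exp (p.2 * I) * I) = 0 := by
  have hint := integrableOn_polarCoord_target_clm_apply (hh.continuous_fderiv one_ne_zero)
    (hc.fderiv ℝ) (w := fun θ : ℝ => exp (θ * I) * I) (by fun_prop)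
  have hcircle : ∀ r ∈ Ioi (0 : ℝ),
      ∫ θ in Ioo (-π) π, fderiv ℝ h (r • exp (θ * I)) (exp (θ * I) * I) = 0 := by
    intro r (hr : 0 < r)
    have hpoint (θ : ℝ) : circleMap 0 r θ = r • exp (θ * I) := by
      rw [circleMap_zero, real_smul]
    have hzero := integral_fderiv_circleMap_eq_zero hh 0 r
    rw [intervalIntegral.integral_of_le (by linarith [Real.pi_pos]),
      integral_Ioc_eq_integral_Ioo] at hzero
    simp only [hpoint, smul_mul_assoc, map_smul, integral_smul] at hzero
    exact (smul_eq_zero.mp hzero).resolve_left hr.ne'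
  rw [polarCoord_target, Measure.volume_eq_prod, setIntegral_prod _ hint,
    setIntegral_congr_fun measurableSet_Ioi hcircle, integral_zero]

end PolarCoordinates

section CauchyRiemann

variable {E : Type*} [NormedAddCommGroup E] [NormedSpace ℂ E]

/-- The Cauchy–Riemann operator `∂h/∂x + i ∂h/∂y`, that is, twice the Wirtinger derivative
`∂h/∂z̄`. -/
noncomputable def dbar (h : ℂ → E) (z : ℂ) : E :=
  fderiv ℝ h z 1 + I • fderiv ℝ h z I

theorem continuous_dbar {h : ℂ → E} (hh : ContDiff ℝ 1 h) : Continuous (dbar h) := by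
  have := hh.continuous_fderiv one_ne_zero
  unfold dbar
  fun_prop

theorem tsupport_dbar_subset (h : ℂ → E) : tsupport (dbar h) ⊆ tsupport h := by
  refine closure_minimal (fun z hz => ?_) (isClosed_tsupport h)
  contrapose! hz
  simp [dbar, fderiv_of_notMem_tsupport ℝ hz]

theorem notMem_tsupport_dbar_of_eventuallyEq_const {h : ℂ → E} {z : ℂ} {c : E}
    (hz : h =ᶠ[𝓝 z] fun _ => c) : z ∉ tsupport (dbar h) := by
  rw [notMem_tsupport_iff_eventuallyEq]
  filter_upwards [hz.eventuallyEq_nhds] with w hw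
  simp [dbar, hw.fderiv_eq]

theorem dbar_comp_add_right (h : ℂ → E) (a z : ℂ) :
    dbar (fun w => h (w + a)) z = dbar h (z + a) := by
  simp only [dbar, fderiv_comp_add_right]

theorem dbar_smul_of_differentiableAt {χ : ℂ → ℂ} {g : ℂ → E} {z : ℂ}
    (hχ : DifferentiableAt ℝ χ z) (hg : DifferentiableAt ℂ g z) :
    dbar (fun w => χ w • g w) z = dbar χ z • g z := by
  have hg_real : HasFDerivAt g ((fderiv ℂ g z).restrictScalars ℝ) z :=
    hg.hasFDerivAt.restrictScalars ℝ
  have cauchyRiemann : fderiv ℂ g z I = I • fderiv ℂ g z 1 := by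
    rw [← map_smul, smul_eq_mul, mul_one]
  simp only [dbar, (hχ.hasFDerivAt.fun_smul hg_real).fderiv, add_apply, smul_apply,
    ContinuousLinearMap.smulRight_apply, ContinuousLinearMap.coe_restrictScalars', cauchyRiemann]
  match_scalars
  · linear_combination χ z * I_mul_I
  · ring

theorem conj_smul_dbar (h : ℂ → E) (z v : ℂ) :
    (starRingEnd ℂ) v • dbar h z = fderiv ℝ h z v + I • fderiv ℝ h z (v * I) := by
  have hv : v = v.re • (1 : ℂ) + v.im • I := by simp
  have hvI : v * I = v.re • I + (-v.im) • (1 : ℂ) := by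
    apply Complex.ext <;> simp
  have hconj : (starRingEnd ℂ) v = v.re - v.im * I := by
    apply Complex.ext <;> simp
  have hDv : fderiv ℝ h z v = v.re • fderiv ℝ h z 1 + v.im • fderiv ℝ h z I := by
    rw [← map_smul, ← map_smul, ← map_add, ← hv]
  have hDvI : fderiv ℝ h z (v * I) = v.re • fderiv ℝ h z I + (-v.im) • fderiv ℝ h z 1 := by
    rw [← map_smul, ← map_smul, ← map_add, ← hvI]
  rw [hDv, hDvI, hconj, dbar]
  simp only [← Complex.coe_smul]
  match_scalars
  · ring
  · linear_combination (-v.im) * I_mul_I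

theorem smul_inv_smul_dbar_polar (h : ℂ → E) {r : ℝ} (hr : r ≠ 0) (θ : ℝ) :
    r • (r • exp (θ * I))⁻¹ • dbar h (r • exp (θ * I)) =
      fderiv ℝ h (r • exp (θ * I)) (exp (θ * I)) +
        I • fderiv ℝ h (r • exp (θ * I)) (exp (θ * I) * I) := by
  have hconj : (starRingEnd ℂ) (exp (θ * I)) = (exp (θ * I))⁻¹ := by
    rw [← exp_conj, ← exp_neg, map_mul, conj_ofReal, conj_I, mul_neg]
  rw [← conj_smul_dbar, hconj, ← smul_assoc, real_smul, real_smul, mul_inv,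
    mul_inv_cancel_left₀ (ofReal_ne_zero.mpr hr)]

theorem integral_inv_smul_dbar [CompleteSpace E] {h : ℂ → E} (hh : ContDiff ℝ 1 h)
    (hc : HasCompactSupport h) : ∫ z, z⁻¹ • dbar h z = -((2 * π) • h 0) := by
  have hpolar : ∀ p ∈ polarCoord.target,
      p.1 • (Complex.polarCoord.symm p)⁻¹ • dbar h (Complex.polarCoord.symm p) =
        fderiv ℝ h (p.1 • exp (p.2 * I)) (exp (p.2 * I)) +
          I • fderiv ℝ h (p.1 • exp (p.2 * I)) (exp (p.2 * I) * I) := by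
    rintro ⟨r, θ⟩ ⟨hr : 0 < r, -⟩
    have hsymm : Complex.polarCoord.symm (r, θ) = r • exp (θ * I) := by
      simp [exp_mul_I, mul_add]
    rw [hsymm, smul_inv_smul_dbar_polar h hr.ne']
  have hfderiv := hh.continuous_fderiv one_ne_zero
  have hradial := integrableOn_polarCoord_target_clm_apply hfderiv (hc.fderiv ℝ)
    (w := fun θ : ℝ => exp (θ * I)) (by fun_prop)
  have hangular := integrableOn_polarCoord_target_clm_apply hfderiv (hc.fderiv ℝ)
    (w := fun θ : ℝ => exp (θ * I) * I) (by fun_prop)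
  rw [← Complex.integral_comp_polarCoord_symm,
    setIntegral_congr_fun polarCoord.open_target.measurableSet hpolar,
    integral_add hradial (hangular.fun_smul I), integral_smul,
    setIntegral_polarCoord_fderiv_radial hh hc, setIntegral_polarCoord_fderiv_angular hh hc,
    smul_zero, add_zero]

theorem integral_inv_sub_smul_dbar [CompleteSpace E] {h : ℂ → E} (hh : ContDiff ℝ 1 h)
    (hc : HasCompactSupport h) (μ : ℂ) :
    ∫ z, (z - μ)⁻¹ • dbar h z = -((2 * π) • h μ) := by
  have hcentered := integral_inv_smul_dbar (h := fun w => h (w + μ)) (by fun_prop)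
    (hc.comp_homeomorph (Homeomorph.addRight μ))
  rw [← integral_add_right_eq_self _ μ]
  simpa only [add_sub_cancel_right, dbar_comp_add_right, zero_add] using hcentered

theorem exists_contDiff_eventually_eq_one_tsupport_subset {F : Type*} [NormedAddCommGroup F]
    [NormedSpace ℝ F] [FiniteDimensional ℝ F] (n : ℕ∞) {K V : Set F}
    (hK : IsCompact K) (hV : IsOpen V) (hKV : K ⊆ V) :
    ∃ χ : F → ℂ, ContDiff ℝ n χ ∧ HasCompactSupport χ ∧ tsupport χ ⊆ V ∧
      ∀ᶠ z in 𝓝ˢ K, χ z = 1 := by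
  obtain ⟨t, ht, hKt, htV⟩ := exists_compact_between hK hV hKV
  obtain ⟨χ, hone, hzero, -⟩ := exists_contMDiffMap_one_nhds_of_subset_interior
    (n := n) (modelWithCornersSelf ℝ F) hK.isClosed hKt
  have hsupp : tsupport (fun z => (χ z : ℂ)) ⊆ t :=
    closure_minimal (Function.support_subset_iff'.mpr fun z hz => by simp [hzero z hz]) ht.isClosed
  exact ⟨fun z => χ z, ofRealCLM.contDiff.comp χ.contMDiff.contDiff,
    ht.of_isClosed_subset (isClosed_tsupport _) hsupp, hsupp.trans htV,
    hone.mono fun z hz => by simp [hz]⟩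

theorem contDiff_smul_of_tsupport_subset [CompleteSpace E] {χ : ℂ → ℂ} {g : ℂ → E}
    {V : Set ℂ} {n : WithTop ℕ∞} (hV : IsOpen V) (hχ : ContDiff ℝ n χ) (hsupp : tsupport χ ⊆ V)
    (hg : DifferentiableOn ℂ g V) : ContDiff ℝ n fun z => χ z • g z := by
  rw [contDiff_iff_contDiffAt]
  intro z
  by_cases hz : z ∈ tsupport χ
  · have hgz : ContDiffAt ℂ n g z := (hg.contDiffOn hV).contDiffAt (hV.mem_nhds (hsupp hz))
    exact hχ.contDiffAt.smul (hgz.restrict_scalars ℝ)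
  · have hzero : (fun w => χ w • g w) =ᶠ[𝓝 z] 0 := by
      filter_upwards [notMem_tsupport_iff_eventuallyEq.mp hz] with w hw
      simp [hw]
    exact contDiffAt_const.congr_of_eventuallyEq hzero

theorem integral_dbar_smul_inv_sub_smul [CompleteSpace E] {χ : ℂ → ℂ} {g : ℂ → E} {V : Set ℂ}
    (hV : IsOpen V) (hχ : ContDiff ℝ 1 χ) (hc : HasCompactSupport χ) (hsupp : tsupport χ ⊆ V)
    (hg : DifferentiableOn ℂ g V) (μ : ℂ) :
    ∫ z, dbar χ z • (z - μ)⁻¹ • g z = -((2 * π) • χ μ • g μ) := by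
  have hleibniz (z : ℂ) : dbar (fun w => χ w • g w) z = dbar χ z • g z := by
    by_cases hz : z ∈ tsupport χ
    · exact dbar_smul_of_differentiableAt (hχ.differentiable one_ne_zero z)
        (hg.differentiableAt (hV.mem_nhds (hsupp hz)))
    · rw [image_eq_zero_of_notMem_tsupport (fun h => hz (tsupport_dbar_subset χ h)), zero_smul]
      exact image_eq_zero_of_notMem_tsupport fun h =>
        hz (tsupport_smul_subset_left χ g (tsupport_dbar_subset _ h))
  rw [← integral_inv_sub_smul_dbar (contDiff_smul_of_tsupport_subset (n := 1) hV hχ hsupp hg)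
    hc.smul_right]
  simp only [hleibniz, smul_comm (dbar χ _)]

variable (E) in
/-- `φ` plays the role of a contour in `V \ K` winding once around each point of `K`. -/
theorem exists_cauchy_kernel [CompleteSpace E] {K V : Set ℂ} (hK : IsCompact K) (hV : IsOpen V)
    (hKV : K ⊆ V) :
    ∃ φ : ℂ → ℂ, Continuous φ ∧ HasCompactSupport φ ∧ tsupport φ ⊆ V \ K ∧
      ∀ g : ℂ → E, DifferentiableOn ℂ g V → ∀ μ ∈ K, ∫ z, φ z • (z - μ)⁻¹ • g z = g μ := by
  obtain ⟨χ, hχ, hc, hsupp, hone⟩ :=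
    exists_contDiff_eventually_eq_one_tsupport_subset 1 hK hV hKV
  have hsub : tsupport (fun z => (-(2 * π)⁻¹ : ℝ) • dbar χ z) ⊆ tsupport (dbar χ) :=
    tsupport_smul_subset_right _ _
  have hdisjoint : Disjoint (tsupport (dbar χ)) K := disjoint_right.mpr fun z hz =>
    notMem_tsupport_dbar_of_eventuallyEq_const (eventually_nhdsSet_iff_forall.mp hone z hz)
  refine ⟨fun z => (-(2 * π)⁻¹ : ℝ) • dbar χ z, (continuous_dbar hχ).fun_const_smul _,
    hc.of_isClosed_subset (isClosed_tsupport _) (hsub.trans (tsupport_dbar_subset χ)),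
    hsub.trans (subset_sdiff.mpr ⟨(tsupport_dbar_subset χ).trans hsupp, hdisjoint⟩),
    fun g hg μ hμ => ?_⟩
  calc ∫ z, ((-(2 * π)⁻¹ : ℝ) • dbar χ z) • (z - μ)⁻¹ • g z
      = (-(2 * π)⁻¹ : ℝ) • ∫ z, dbar χ z • (z - μ)⁻¹ • g z := by
        simp only [smul_assoc, integral_smul]
    _ = g μ := by
        rw [integral_dbar_smul_inv_sub_smul hV hχ hc hsupp hg, hone.self_of_nhdsSet μ hμ,
          one_smul, neg_smul, smul_neg, neg_neg, inv_smul_smul₀ Real.two_pi_pos.ne']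

end CauchyRiemann

theorem exists_isCompact_isolated_of_connectedComponentIn_subset {α : Type*} [TopologicalSpace α]
    [T2Space α] {S U : Set α} (hS : IsCompact S) (hU : IsOpen U) {z : α} (hz : z ∈ S)
    (hzU : connectedComponentIn S z ⊆ U) :
    ∃ K V : Set α, IsCompact K ∧ IsOpen V ∧ z ∈ K ∧ K ⊆ V ∧ V ⊆ U ∧ V ∩ S ⊆ K := by
  have : CompactSpace S := isCompact_iff_compactSpace.mp hS
  rw [connectedComponentIn_eq_image hz, image_subset_iff,
    connectedComponent_eq_iInter_isClopen] at hzU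
  obtain ⟨⟨s, hs, hzs⟩, hsU⟩ :
      ∃ s : {s : Set S // IsClopen s ∧ (⟨z, hz⟩ : S) ∈ s}, s.val ⊆ Subtype.val ⁻¹' U := by
    have : Nonempty {s : Set S // IsClopen s ∧ (⟨z, hz⟩ : S) ∈ s} :=
      ⟨⟨univ, isClopen_univ, mem_univ _⟩⟩
    refine exists_subset_nhds_of_compactSpace ?_ (fun s => s.2.1.isClosed)
      fun x hx => (hU.preimage continuous_subtype_val).mem_nhds (hzU hx)
    rintro ⟨s, hs, hzs⟩ ⟨t, ht, hzt⟩
    exact ⟨⟨s ∩ t, hs.inter ht, hzs, hzt⟩, inter_subset_left, inter_subset_right⟩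
  have hcompl : IsClosed (Subtype.val '' sᶜ : Set α) :=
    (hs.compl.isClosed.isCompact.image continuous_subtype_val).isClosed
  refine ⟨Subtype.val '' s, U \ Subtype.val '' sᶜ,
    hs.isClosed.isCompact.image continuous_subtype_val, hU.sdiff hcompl, ⟨_, hzs, rfl⟩,
    subset_sdiff.mpr ⟨image_subset_iff.mpr hsU, ?_⟩, sdiff_subset, ?_⟩
  · exact (disjoint_image_iff Subtype.val_injective).mpr disjoint_compl_right
  · rintro x ⟨⟨-, hx⟩, hxS⟩
    exact ⟨⟨x, hxS⟩, by_contra fun hxs => hx ⟨_, hxs, rfl⟩, rfl⟩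

theorem integrable_smul_of_continuousOn {α 𝕜 E : Type*} [TopologicalSpace α] [MeasurableSpace α]
    [OpensMeasurableSpace α] {ν : Measure α} [IsFiniteMeasureOnCompacts ν] [NormedField 𝕜]
    [NormedAddCommGroup E] [NormedSpace 𝕜 E] {φ : α → 𝕜} {f : α → E} {W : Set α}
    (hW : IsOpen W) (hφ : Continuous φ) (hc : HasCompactSupport φ) (hsupp : tsupport φ ⊆ W)
    (hf : ContinuousOn f W) : Integrable (fun z => φ z • f z) ν := by
  refine Continuous.integrable_of_hasCompactSupport (continuous_of_tsupport fun x hx => ?_)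
    hc.smul_right
  have hxW : x ∈ W := hsupp (tsupport_smul_subset_left φ f hx)
  exact hφ.continuousAt.smul (hf.continuousAt (hW.mem_nhds hxW))

section Intertwining

variable {𝕜 X Z : Type*} [NontriviallyNormedField 𝕜] [NormedAddCommGroup X] [NormedSpace 𝕜 X]
  [NormedAddCommGroup Z] [NormedSpace 𝕜 Z] {p : X →L[𝕜] Z} {T : X →L[𝕜] X} {Tc : Z →L[𝕜] Z}

theorem comp_algebraMap_sub_eq (hint : p ∘L T = Tc ∘L p) (z : 𝕜) :
    p ∘L (algebraMap 𝕜 (X →L[𝕜] X) z - T) = (algebraMap 𝕜 (Z →L[𝕜] Z) z - Tc) ∘L p := by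
  ext f
  simpa [Algebra.algebraMap_eq_smul_one] using DFunLike.congr_fun hint f

theorem comp_resolvent_eq_resolvent_comp (hint : p ∘L T = Tc ∘L p) {z : 𝕜}
    (hT : z ∈ resolventSet 𝕜 T) (hTc : z ∈ resolventSet 𝕜 Tc) :
    p ∘L resolvent T z = resolvent Tc z ∘L p :=
  calc p ∘L resolvent T z
      = (resolvent Tc z * (algebraMap 𝕜 (Z →L[𝕜] Z) z - Tc)) ∘L p ∘L resolvent T z := by
        rw [resolvent, resolvent, Ring.inverse_mul_cancel _ hTc]; rfl
    _ = resolvent Tc z ∘L (p ∘L (algebraMap 𝕜 (X →L[𝕜] X) z - T)) ∘L resolvent T z := by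
        rw [comp_algebraMap_sub_eq hint]; rfl
    _ = resolvent Tc z ∘L p ∘L ((algebraMap 𝕜 (X →L[𝕜] X) z - T) * resolvent T z) := rfl
    _ = resolvent Tc z ∘L p := by
        rw [resolvent, resolvent, Ring.mul_inverse_cancel _ hT]; rfl

theorem mem_resolventSet_of_comp_eq (hp : Function.Injective p) (hint : p ∘L T = Tc ∘L p) {μ : 𝕜}
    (hμ : μ ∈ resolventSet 𝕜 Tc) {S : X →L[𝕜] X} (hS : p ∘L S = resolvent Tc μ ∘L p) :
    μ ∈ resolventSet 𝕜 T := by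
  have cancel {A B : X →L[𝕜] X} (h : p ∘L A = p ∘L B) : A = B :=
    ContinuousLinearMap.ext fun f => hp (DFunLike.congr_fun h f)
  have hright : (algebraMap 𝕜 (X →L[𝕜] X) μ - T) * S = 1 := cancel <|
    calc p ∘L (algebraMap 𝕜 (X →L[𝕜] X) μ - T) ∘L S
        = (algebraMap 𝕜 (Z →L[𝕜] Z) μ - Tc) ∘L p ∘L S := by
          rw [← ContinuousLinearMap.comp_assoc, comp_algebraMap_sub_eq hint]; rfl
      _ = ((algebraMap 𝕜 (Z →L[𝕜] Z) μ - Tc) * resolvent Tc μ) ∘L p := by rw [hS]; rfl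
      _ = p ∘L 1 := by rw [resolvent, Ring.mul_inverse_cancel _ hμ]; rfl
  have hleft : S * (algebraMap 𝕜 (X →L[𝕜] X) μ - T) = 1 := cancel <|
    calc p ∘L S ∘L (algebraMap 𝕜 (X →L[𝕜] X) μ - T)
        = resolvent Tc μ ∘L p ∘L (algebraMap 𝕜 (X →L[𝕜] X) μ - T) := by
          rw [← ContinuousLinearMap.comp_assoc, hS]; rfl
      _ = (resolvent Tc μ * (algebraMap 𝕜 (Z →L[𝕜] Z) μ - Tc)) ∘L p := by
          rw [comp_algebraMap_sub_eq hint]; rfl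
      _ = p ∘L 1 := by rw [resolvent, Ring.inverse_mul_cancel _ hμ]; rfl
  exact ⟨⟨_, S, hright, hleft⟩, rfl⟩

end Intertwining

section Spectrum

variable {X Z : Type*} [NormedAddCommGroup X] [NormedSpace ℂ X] [CompleteSpace X]
  [NormedAddCommGroup Z] [NormedSpace ℂ Z] [CompleteSpace Z]
  {p : X →L[ℂ] Z} {T : X →L[ℂ] X} {Tc : Z →L[ℂ] Z}

theorem subset_resolventSet_of_sdiff_subset (hp : Function.Injective p)
    (hint : p ∘L T = Tc ∘L p) {K V : Set ℂ} (hK : IsCompact K) (hV : IsOpen V) (hKV : K ⊆ V)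
    (hVTc : V ⊆ resolventSet ℂ Tc) (hVT : V \ K ⊆ resolventSet ℂ T) : K ⊆ resolventSet ℂ T := by
  obtain ⟨φ, hφ, hc, hsupp, hcauchy⟩ := exists_cauchy_kernel (X →L[ℂ] Z) hK hV hKV
  intro μ hμ
  have hintegrable : Integrable fun z => φ z • (z - μ)⁻¹ • resolvent T z := by
    refine integrable_smul_of_continuousOn (hV.sdiff hK.isClosed) hφ hc hsupp fun z hz => ?_
    have hzμ : z - μ ≠ 0 := sub_ne_zero.mpr fun h => hz.2 (h ▸ hμ)
    have hres := (spectrum.hasDerivAt_resolvent_const_left (hVT hz)).continuousAt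
    exact ContinuousAt.continuousWithinAt (by fun_prop (disch := assumption))
  have hholo : DifferentiableOn ℂ (fun z => resolvent Tc z ∘L p) V := fun z hz =>
    have hres := (spectrum.hasDerivAt_resolvent_const_left (hVTc hz)).differentiableAt
    (hres.clm_comp (differentiableAt_const p)).differentiableWithinAt
  have hintertwine (z : ℂ) : p ∘L (φ z • (z - μ)⁻¹ • resolvent T z) =
      φ z • (z - μ)⁻¹ • (resolvent Tc z ∘L p) := by
    by_cases hz : z ∈ tsupport φ
    · have hzVK := hsupp hz
      rw [ContinuousLinearMap.comp_smul, ContinuousLinearMap.comp_smul,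
        comp_resolvent_eq_resolvent_comp hint (hVT hzVK) (hVTc hzVK.1)]
    · simp only [image_eq_zero_of_notMem_tsupport hz, zero_smul, ContinuousLinearMap.comp_zero]
  refine mem_resolventSet_of_comp_eq hp hint (hVTc (hKV hμ))
    (S := ∫ z, φ z • (z - μ)⁻¹ • resolvent T z) ?_
  calc p ∘L ∫ z, φ z • (z - μ)⁻¹ • resolvent T z
      = ∫ z, p ∘L (φ z • (z - μ)⁻¹ • resolvent T z) :=
        ((ContinuousLinearMap.compL ℂ X X Z p).integral_comp_comm hintegrable).symm
    _ = ∫ z, φ z • (z - μ)⁻¹ • (resolvent Tc z ∘L p) := by simp only [hintertwine]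
    _ = resolvent Tc μ ∘L p := hcauchy _ hholo μ hμ

theorem stmt6_general (hp : Function.Injective p) (hint : p ∘L T = Tc ∘L p) {z : ℂ}
    (hz : z ∈ spectrum ℂ T) :
    (connectedComponentIn (spectrum ℂ T) z ∩ spectrum ℂ Tc).Nonempty := by
  by_contra hempty
  have hsub : connectedComponentIn (spectrum ℂ T) z ⊆ resolventSet ℂ Tc := fun w hw =>
    by_contra fun hwTc => hempty ⟨w, hw, hwTc⟩
  obtain ⟨K, V, hK, hV, hzK, hKV, hVTc, hVK⟩ :=
    exists_isCompact_isolated_of_connectedComponentIn_subset (spectrum.isCompact T)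
      (spectrum.isOpen_resolventSet Tc) hz hsub
  have hVT : V \ K ⊆ resolventSet ℂ T := fun w hw =>
    by_contra fun hwT => hw.2 (hVK ⟨hw.1, hwT⟩)
  exact hz (subset_resolventSet_of_sdiff_subset hp hint hK hV hKV hVTc hVT hzK)

end Spectrum

/-- If `T` is invertible on `X`, `Ť` invertible on `Z`, and `p : X → Z` is an injective
bounded map with dense range intertwining `T` and `Ť`, with `‖p(Tⁿf)‖ ≤ ‖Tⁿf‖`,
`σ(Ť) = 𝕋` and `𝕋 ⊆ σ(T)`, then no connected component of `σ(T)` is entirely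
contained in the open unit disc. -/
theorem stmt6 {X Z : Type*} [NormedAddCommGroup X] [NormedSpace ℂ X] [CompleteSpace X]
    [NormedAddCommGroup Z] [NormedSpace ℂ Z] [CompleteSpace Z]
    (p : X →L[ℂ] Z) (hdense : DenseRange p) (hinj : Function.Injective p)
    (T : X →L[ℂ] X) (hT : IsUnit T)
    (Tc : Z →L[ℂ] Z) (hTc : IsUnit Tc)
    (hint : ∀ f : X, p (T f) = Tc (p f))
    (hnorm : ∀ (n : ℕ) (f : X), ‖p ((T ^ n) f)‖ ≤ ‖(T ^ n) f‖)
    (hspec : spectrum ℂ Tc = Metric.sphere (0 : ℂ) 1)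
    (hsub : Metric.sphere (0 : ℂ) 1 ⊆ spectrum ℂ T) :
    ∀ z ∈ spectrum ℂ T, ¬ connectedComponentIn (spectrum ℂ T) z ⊆ Metric.ball (0 : ℂ) 1 := by
  intro z hz hball
  obtain ⟨w, hw, hwTc⟩ := stmt6_general hinj (ContinuousLinearMap.ext hint) hz
  exact Metric.sphere_disjoint_ball.notMem_of_mem_left (hspec ▸ hwTc) (hball hw)
end
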